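/- arXiv:1104.1231 — 3 statements merged into one kernel-verified Lean document; each statement's English description precedes it below -/
import Mathlib

section
/- Every finitely generated group is poly-ccc; that is, every finitely generated group admits a centered, cofinal, coherent sequence of fair polytilings. -/
open scoped Pointwise

/-- A polytiling of a group `G`: finite tiles `T 0, …, T (k-1)`, each containing `1`,
together with nonempty center sets `Δ i`, such that the translates `δ • T i`
(`δ ∈ Δ i`) partition `G`. -/
structure Polytiling (G : Type*) [Group G] where
  k : ℕ
  k_pos : 0 < k
  T : Fin k → Finset G
  Δ : Fin k → Set G
  one_mem : ∀ i, (1 : G) ∈ T i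
  delta_nonempty : ∀ i, (Δ i).Nonempty
  covers : ∀ g : G, ∃ i : Fin k, ∃ δ ∈ Δ i, g ∈ δ • (T i : Set G)
  disj : ∀ (i j : Fin k), ∀ δ ∈ Δ i, ∀ δ' ∈ Δ j, (i, δ) ≠ (j, δ') →
    Disjoint (δ • (T i : Set G)) (δ' • (T j : Set G))

/-- A polytiling is fair if all tiles have the same cardinality. -/
def Polytiling.Fair {G : Type*} [Group G] (P : Polytiling G) : Prop :=
  ∀ i j, (P.T i).card = (P.T j).card

/-- The first index of a polytiling. -/
def Polytiling.fst {G : Type*} [Group G] (P : Polytiling G) : Fin P.k := ⟨0, P.k_pos⟩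

/-- The pieces of the partition of `G` induced by a polytiling. -/
def Polytiling.pieces {G : Type*} [Group G] (P : Polytiling G) : Set (Set G) :=
  {A : Set G | ∃ i : Fin P.k, ∃ δ ∈ P.Δ i, A = δ • (P.T i : Set G)}


theorem pccc_exists_parent {V : Type*} (H : SimpleGraph V) (hc : H.Connected) (o v : V) (hv : v ≠ o) :
    ∃ u, H.Adj v u ∧ H.dist o u + 1 = H.dist o v := by
  obtain ⟨w, hw⟩ := hc.exists_walk_length_eq_dist v o
  cases w with
  | nil => exact absurd rfl hv
  | cons h p =>
    rename_i u
    refine ⟨u, h, ?_⟩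
    have h1 := SimpleGraph.dist_le p
    have h2 : H.dist v o ≤ H.dist v u + H.dist u o := hc.dist_triangle
    have h3 : H.dist v u = 1 := SimpleGraph.dist_eq_one_iff_adj.2 h
    rw [SimpleGraph.dist_comm (u := o) (v := u), SimpleGraph.dist_comm (u := o) (v := v)]
    simp only [SimpleGraph.Walk.length_cons] at hw
    omega

theorem pccc_forest {V : Type*} [Infinite V] (H : SimpleGraph V) (hc : H.Connected)
    (hf : ∀ v, {u | H.Adj v u}.Finite) :
    ∃ f : V → V, (∀ v, H.Adj v (f v)) ∧ WellFounded (fun u v => f u = v) := by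
  classical
  obtain ⟨o⟩ := hc.nonempty
  set d : V → ℕ := fun v => H.dist o v with hd
  have hp0 : ∀ v, ∃ u, v ≠ o → H.Adj v u ∧ d u + 1 = d v := by
    intro v
    by_cases hv : v = o
    · exact ⟨v, fun h => absurd hv h⟩
    · obtain ⟨u, hu⟩ := pccc_exists_parent H hc o v hv
      exact ⟨u, fun _ => hu⟩
  choose p hp using hp0
  -- descendants
  set R : V → V → Prop := fun u v => u ≠ o ∧ p u = v with hR
  set D : V → Set V := fun v => {u | Relation.ReflTransGen R u v} with hD
  have hDd : ∀ u v, Relation.ReflTransGen R u v → d v ≤ d u := by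
    intro u v h
    induction h with
    | refl => exact le_rfl
    | tail _ h ih =>
      have := (hp _ h.1).2
      rw [h.2] at this
      omega
  have hDo : ∀ n v, d v = n → v ∈ D o := by
    intro n
    induction n with
    | zero =>
      intro v hv
      have : o = v := hc.dist_eq_zero_iff.1 hv
      subst this; exact Relation.ReflTransGen.refl
    | succ n ih =>
      intro v hv
      by_cases hvo : v = o
      · subst hvo; exact Relation.ReflTransGen.refl
      have := hp v hvo
      exact Relation.ReflTransGen.head ⟨hvo, rfl⟩ (ih (p v) (by omega))
  have hchild : ∀ v, (D v).Infinite → ∃ u, u ≠ o ∧ p u = v ∧ (D u).Infinite := by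
    intro v hv
    by_contra hcon
    push Not at hcon
    apply hv
    have hfin : {u | u ≠ o ∧ p u = v}.Finite := by
      refine (hf v).subset ?_
      rintro u ⟨h1, h2⟩
      have := (hp u h1).1
      rw [h2] at this
      exact this.symm
    have hU : ({v} ∪ ⋃ u ∈ {u | u ≠ o ∧ p u = v}, D u).Finite := by
      refine (Set.finite_singleton v).union (hfin.biUnion ?_)
      rintro u ⟨h1, h2⟩
      exact hcon u h1 h2
    refine hU.subset ?_
    intro u hu
    rcases Relation.ReflTransGen.cases_tail hu with h | ⟨w, h1, h2⟩
    · left; exact h.symm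
    · right
      simp only [Set.mem_iUnion]
      exact ⟨w, h2, h1⟩
  have hs0 : ∀ v, ∃ u, (D v).Infinite → u ≠ o ∧ p u = v ∧ (D u).Infinite := by
    intro v
    by_cases hv : (D v).Infinite
    · obtain ⟨u, hu⟩ := hchild v hv
      exact ⟨u, fun _ => hu⟩
    · exact ⟨v, fun h => absurd h hv⟩
  choose s hs using hs0
  have hoinf : (D o).Infinite := by
    have : D o = Set.univ := Set.eq_univ_of_forall fun v => hDo _ v rfl
    rw [this]; exact Set.infinite_univ
  have hne : ∀ v, ¬ (D v).Infinite → v ≠ o := by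
    rintro v hv rfl; exact hv hoinf
  refine ⟨fun v => if (D v).Infinite then s v else p v, ?_, ?_⟩
  · intro v
    by_cases hv : (D v).Infinite
    · simp only [hv, if_true]
      obtain ⟨h1, h2, -⟩ := hs v hv
      have := (hp _ h1).1
      rw [h2] at this
      exact this.symm
    · simp only [hv, if_false]
      exact (hp v (hne v hv)).1
  · have hA : ∀ n v, ¬ (D v).Infinite → (D v).ncard = n →
        Acc (fun u v => (if (D u).Infinite then s u else p u) = v) v := by
      intro n
      induction n using Nat.strong_induction_on with
      | _ n ih =>
        intro v hv hn
        constructor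
        intro u hu
        by_cases hui : (D u).Infinite
        · simp only [hui, if_true] at hu
          subst hu
          exact absurd (hs u hui).2.2 hv
        · simp only [hui, if_false] at hu
          have huo := hne u hui
          refine ih _ ?_ u hui rfl
          rw [← hn]
          apply Set.ncard_lt_ncard _ (Set.not_infinite.1 hv)
          refine ⟨fun w hw => Relation.ReflTransGen.tail hw ⟨huo, hu⟩, fun hsub => ?_⟩
          have hvu : v ∈ D u := hsub Relation.ReflTransGen.refl
          have h1 := hDd _ _ hvu
          have h2 := (hp u huo).2
          rw [hu] at h2
          omega
    have hB : ∀ n v, d v = n →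
        Acc (fun u v => (if (D u).Infinite then s u else p u) = v) v := by
      intro n
      induction n using Nat.strong_induction_on with
      | _ n ih =>
        intro v hn
        constructor
        intro u hu
        by_cases hui : (D u).Infinite
        · simp only [hui, if_true] at hu
          obtain ⟨h1, h2, -⟩ := hs u hui
          have := (hp _ h1).2
          rw [h2, hu] at this
          exact ih (d u) (by omega) u rfl
        · exact hA _ u hui rfl
    exact ⟨fun v => hB _ v rfl⟩

theorem pccc_flatMap_index {V W : Type*} (L : V → List W) (l : List V) (k : ℕ) (x : W)
    (h : (l.flatMap L)[k]? = some x) : ∃ u ∈ l, ∃ k' ≤ k, (L u)[k']? = some x := by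
  induction l generalizing k with
  | nil => simp at h
  | cons a l ih =>
    rw [List.flatMap_cons, List.getElem?_append] at h
    split_ifs at h with hk
    · exact ⟨a, by simp, k, le_rfl, h⟩
    · obtain ⟨u, hu, k', hk', h'⟩ := ih _ h
      exact ⟨u, by simp [hu], k', by omega, h'⟩

theorem pccc_acyclic {V : Type*} (f : V → V) (wf : WellFounded (fun u v => f u = v)) (y : V) (n : ℕ)
    (hn : 0 < n) : f^[n] y ≠ y := by
  induction y using wf.induction generalizing n with
  | _ y ih =>
    intro h
    obtain ⟨m, rfl⟩ : ∃ m, n = m + 1 := ⟨n - 1, by omega⟩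
    have h' : f (f^[m] y) = y := (Function.iterate_succ_apply' f m y).symm.trans h
    refine ih (f^[m] y) h' (m + 1) hn ?_
    rw [← Function.iterate_add_apply, show m + 1 + m = m + (m + 1) by omega,
      Function.iterate_add_apply, h]

theorem pccc_acyclic' {V : Type*} (f : V → V) (wf : WellFounded (fun u v => f u = v)) (y : V) (i j : ℕ)
    (h : f^[i] y = f^[j] y) : i = j := by
  wlog hij : i ≤ j generalizing i j
  · exact (this j i h.symm (by omega)).symm
  by_contra hne
  refine pccc_acyclic f wf (f^[i] y) (j - i) (by omega) ?_
  rw [← Function.iterate_add_apply, show j - i + i = j by omega, h]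

theorem pccc_block {V : Type*} [DecidableEq V] (l : List V) (hl : l.Nodup) (M k : ℕ) (hM : 0 < M)
    (hk : (k + 1) * M ≤ l.length) : {w | w ∈ l ∧ l.idxOf w / M = k}.ncard = M := by
  have hlt : ∀ t : Fin M, k * M + t < l.length := by
    intro t; have := t.2; rw [add_mul] at hk; omega
  have : {w | w ∈ l ∧ l.idxOf w / M = k} = Set.range (fun t : Fin M => l[k * M + t]'(hlt t)) := by
    ext w
    constructor
    · rintro ⟨h1, h2⟩
      refine ⟨⟨l.idxOf w % M, Nat.mod_lt _ hM⟩, ?_⟩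
      have : k * M + l.idxOf w % M = l.idxOf w := by
        rw [← h2]; exact Nat.div_add_mod' _ _
      simp [this]
    · rintro ⟨t, rfl⟩
      refine ⟨List.getElem_mem _, ?_⟩
      rw [hl.idxOf_getElem]
      rw [mul_comm, Nat.mul_add_div hM, Nat.div_eq_of_lt t.2, add_zero]
  rw [this, ← Set.image_univ, Set.ncard_image_of_injective]
  · simp [Set.ncard_univ]
  · intro a b hab
    have := (hl.getElem_inj_iff).1 hab
    ext; omega

theorem pccc_group {V : Type*} (f : V → V) (wf : WellFounded (fun u v => f u = v))
    (hf : ∀ v, {u | f u = v}.Finite) (M : ℕ) (hM : 0 < M) :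
    ∃ q : V → V × ℕ, (∀ v, {w | q w = q v}.ncard = M) ∧
      ∀ v w, q v = q w → ∃ i j, i ≤ M ∧ j ≤ M ∧ f^[i] v = f^[j] w := by
  classical
  set fib : V → Finset V := fun v => (hf v).toFinset with hfib
  have hmem : ∀ u v, u ∈ fib v ↔ f u = v := by intro u v; simp [hfib]
  obtain ⟨L, hL⟩ : ∃ L : V → List V, ∀ v, L v =
      (v :: (fib v).toList.flatMap L).take ((v :: (fib v).toList.flatMap L).length % M) := by
    let F : (v : V) → ((u : V) → f u = v → List V) → List V := fun v rec =>
      (v :: (fib v).toList.attach.flatMap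
        (fun u => rec u.1 ((hmem _ _).1 (Finset.mem_toList.1 u.2)))).take
      ((v :: (fib v).toList.attach.flatMap
        (fun u => rec u.1 ((hmem _ _).1 (Finset.mem_toList.1 u.2)))).length % M)
    refine ⟨wf.fix F, fun v => ?_⟩
    have hfl : (fib v).toList.attach.flatMap (fun u => wf.fix F u.1) =
        (fib v).toList.flatMap (wf.fix F) := by
      conv_rhs => rw [← List.attach_map_subtype_val (fib v).toList, List.flatMap_map]
    rw [WellFounded.fix_eq]
    simp only [F]
    rw [← hfl]
  set S : V → List V := fun v => v :: (fib v).toList.flatMap L with hS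
  replace hL : ∀ v, L v = (S v).take ((S v).length % M) := hL
  have hmS : ∀ x v, x ∈ S v ↔ x = v ∨ ∃ u, f u = v ∧ x ∈ L u := by
    intro x v
    simp [hS, hmem]
  have hLS : ∀ x v, x ∈ L v → x ∈ S v := by
    intro x v h; rw [hL] at h; exact List.mem_of_mem_take h
  have hpath : ∀ v x, x ∈ S v → ∃ i, f^[i] x = v ∧ ∀ j < i, x ∈ L (f^[j] x) := by
    intro v
    induction v using wf.induction with
    | _ v ih =>
      intro x hx
      rcases (hmS _ _).1 hx with rfl | ⟨u, hu, hxu⟩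
      · exact ⟨0, rfl, by simp⟩
      · obtain ⟨i, hi, hj⟩ := ih u hu x (hLS _ _ hxu)
        refine ⟨i + 1, by rw [Function.iterate_succ_apply', hi, hu], ?_⟩
        intro j hji
        rcases Nat.lt_succ_iff_lt_or_eq.1 hji with h | rfl
        · exact hj j h
        · rw [hi]; exact hxu
  have hidx : ∀ v k x, (S v)[k]? = some x → ∃ i ≤ k, f^[i] x = v := by
    intro v
    induction v using wf.induction with
    | _ v ih =>
      intro k x hx
      cases k with
      | zero =>
        simp [hS] at hx
        exact ⟨0, le_rfl, hx.symm⟩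
      | succ k =>
        simp only [hS, List.getElem?_cons_succ] at hx
        obtain ⟨u, hu, k', hk', h⟩ := pccc_flatMap_index _ _ _ _ hx
        have hu' : f u = v := (hmem _ _).1 (Finset.mem_toList.1 hu)
        rw [hL, List.getElem?_take] at h
        split_ifs at h
        obtain ⟨i, hi, hi'⟩ := ih u hu' k' x h
        exact ⟨i + 1, by omega, by rw [Function.iterate_succ_apply', hi', hu']⟩
  have hLage : ∀ v x, x ∈ L v → ∃ i < M, f^[i] x = v := by
    intro v x hx
    rw [hL] at hx
    obtain ⟨k, hk⟩ := List.mem_iff_getElem?.1 hx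
    rw [List.getElem?_take] at hk
    split_ifs at hk with hkM
    obtain ⟨i, hi, h⟩ := hidx _ _ _ hk
    have := Nat.mod_lt (S v).length hM
    exact ⟨i, by omega, h⟩
  have hSage : ∀ v x, x ∈ S v → ∃ i ≤ M, f^[i] x = v := by
    intro v x hx
    rcases (hmS _ _).1 hx with rfl | ⟨u, hu, hxu⟩
    · exact ⟨0, by omega, rfl⟩
    · obtain ⟨i, hi, h⟩ := hLage _ _ hxu
      exact ⟨i + 1, by omega, by rw [Function.iterate_succ_apply', h, hu]⟩
  have hnd : ∀ v, (S v).Nodup := by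
    intro v
    induction v using wf.induction with
    | _ v ih =>
      simp only [hS, List.nodup_cons, List.nodup_flatMap]
      refine ⟨?_, ?_, ?_⟩
      · intro h
        obtain ⟨u, hu, h⟩ := List.mem_flatMap.1 h
        have hu' : f u = v := (hmem _ _).1 (Finset.mem_toList.1 hu)
        obtain ⟨i, -, hi⟩ := hLage _ _ h
        refine pccc_acyclic f wf v (i + 1) (by omega) ?_
        rw [Function.iterate_succ_apply', hi, hu']
      · intro u hu
        have hu' : f u = v := (hmem _ _).1 (Finset.mem_toList.1 hu)
        rw [hL]
        exact (ih u hu').sublist (List.take_sublist _ _)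
      · refine List.Pairwise.imp_of_mem ?_ (Finset.nodup_toList (fib v))
        intro u w hu hw huw x hxu hxw
        have hu' : f u = v := (hmem _ _).1 (Finset.mem_toList.1 hu)
        have hw' : f w = v := (hmem _ _).1 (Finset.mem_toList.1 hw)
        obtain ⟨i, -, hi⟩ := hLage _ _ hxu
        obtain ⟨j, -, hj⟩ := hLage _ _ hxw
        have : i + 1 = j + 1 := by
          apply pccc_acyclic' f wf x
          rw [Function.iterate_succ_apply', Function.iterate_succ_apply', hi, hj, hu', hw']
        have : i = j := by omega
        subst this
        exact huw (hi.symm.trans hj)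
  have hdep : ∀ x, ∃ v, x ∈ S v ∧ x ∉ L v := by
    intro x
    by_contra hcon
    push Not at hcon
    have : ∀ i, x ∈ S (f^[i] x) := by
      intro i
      induction i with
      | zero => exact (hmS _ _).2 (Or.inl rfl)
      | succ i ih =>
        exact (hmS _ _).2 (Or.inr ⟨f^[i] x, (Function.iterate_succ_apply' f i x).symm, hcon _ ih⟩)
    obtain ⟨i, hi, h⟩ := hLage _ _ (hcon _ (this M))
    have := pccc_acyclic' f wf x _ _ h
    omega
  have huniq : ∀ x v w, x ∈ S v → x ∉ L v → x ∈ S w → x ∉ L w → v = w := by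
    intro x v w hv hv' hw hw'
    obtain ⟨i, hi, hi'⟩ := hpath _ _ hv
    obtain ⟨j, hj, hj'⟩ := hpath _ _ hw
    rcases lt_trichotomy i j with h | h | h
    · exact absurd (hi ▸ hj' i h) hv'
    · subst h; exact hi.symm.trans hj
    · exact absurd (hj ▸ hi' j h) hw'
  choose c hc hc' using hdep
  set E : V → List V := fun v => (S v).drop ((S v).length % M) with hE
  have hmE : ∀ x v, x ∈ E v ↔ c x = v := by
    intro x v
    have hap : L v ++ E v = S v := by rw [hL]; exact List.take_append_drop _ _
    have hn := hnd v
    rw [← hap, List.nodup_append] at hn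
    constructor
    · intro h
      refine huniq x _ _ (hc x) (hc' x) ?_ ?_
      · rw [← hap]; exact List.mem_append_right _ h
      · intro h'; exact hn.2.2 x h' x h rfl
    · rintro rfl
      have := hc x
      rw [← hap, List.mem_append] at this
      exact this.resolve_left (hc' x)
  have hEn : ∀ v, (E v).Nodup := fun v => (hnd v).sublist (List.drop_sublist _ _)
  have hEl : ∀ v, (E v).length = M * ((S v).length / M) := by
    intro v
    have := Nat.div_add_mod (S v).length M
    simp only [hE, List.length_drop]
    omega
  refine ⟨fun x => (c x, (E (c x)).idxOf x / M), ?_, ?_⟩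
  · intro v
    have hset : {w | (c w, (E (c w)).idxOf w / M) = (c v, (E (c v)).idxOf v / M)} =
        {w | w ∈ E (c v) ∧ (E (c v)).idxOf w / M = (E (c v)).idxOf v / M} := by
      ext w
      simp only [Set.mem_ofPred_eq, Prod.mk.injEq, hmE]
      constructor
      · rintro ⟨h1, h2⟩; exact ⟨h1, by rw [← h2, h1]⟩
      · rintro ⟨h1, h2⟩; exact ⟨h1, by rw [← h2, h1]⟩
    rw [hset]
    apply pccc_block _ (hEn _) _ _ hM
    have hlt : (E (c v)).idxOf v < (E (c v)).length := List.idxOf_lt_length_iff.2 ((hmE _ _).2 rfl)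
    rw [hEl] at hlt ⊢
    rw [mul_comm]
    exact Nat.mul_le_mul_left _ (Nat.div_lt_of_lt_mul hlt)
  · intro v w h
    have h1 : c v = c w := (Prod.mk.inj h).1
    obtain ⟨i, hi, h2⟩ := hSage _ _ (hc v)
    obtain ⟨j, hj, h3⟩ := hSage _ _ (hc w)
    exact ⟨i, j, hi, hj, by rw [h2, h3, h1]⟩

theorem pccc_group_first {V : Type*} (f : V → V) (wf : WellFounded (fun u v => f u = v))
    (hf : ∀ v, {u | f u = v}.Finite) (F : Set V) (hF : F.Finite) (hne : F.Nonempty) :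
    ∃ (t : Setoid V) (M : ℕ) (F' : Set V), 0 < M ∧ F'.Finite ∧ (∀ v, {w | t v w}.ncard = M) ∧
      (∀ v ∈ F, ∀ w ∈ F, t v w) ∧
      ∀ v w, t v w → (v ∈ F' ∧ w ∈ F') ∨ ∃ i j, i ≤ M ∧ j ≤ M ∧ f^[i] v = f^[j] w := by
  classical
  have hback : ∀ v, {u | ∃ n, f^[n] u = v}.Finite := by
    intro v
    induction v using wf.induction with
    | _ v ih =>
      refine ((Set.finite_singleton v).union ((hf v).biUnion (t := fun w => {u | ∃ n, f^[n] u = w})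
        (fun u hu => ih u hu))).subset ?_
      rintro u ⟨n, hn⟩
      cases n with
      | zero => left; exact hn
      | succ n =>
        right
        simp only [Set.mem_iUnion]
        exact ⟨f^[n] u, (Function.iterate_succ_apply' f n u).symm.trans hn, n, rfl⟩
  set F' : Set V := ⋃ v ∈ F, {u | ∃ n, f^[n] u = v} with hF'
  have hF'fin : F'.Finite := hF.biUnion fun v _ => hback v
  have hFF : ∀ v ∈ F, v ∈ F' := by
    intro v hv
    simp only [hF', Set.mem_iUnion]
    exact ⟨v, hv, 0, rfl⟩
  have hcl : ∀ v, v ∉ F' → f v ∉ F' := by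
    intro v hv h
    apply hv
    simp only [hF', Set.mem_iUnion] at h ⊢
    obtain ⟨w, hw, n, hn⟩ := h
    exact ⟨w, hw, n + 1, hn⟩
  have hMpos : 0 < F'.ncard := by
    rw [Set.ncard_pos hF'fin]
    obtain ⟨v, hv⟩ := hne
    exact ⟨v, hFF v hv⟩
  let g : {v // v ∉ F'} → {v // v ∉ F'} := fun v => ⟨f v.1, hcl v.1 v.2⟩
  have hgi : ∀ i (v : {v // v ∉ F'}), (g^[i] v).1 = f^[i] v.1 := by
    intro i
    induction i with
    | zero => intro v; rfl
    | succ i ih => intro v; rw [Function.iterate_succ_apply, Function.iterate_succ_apply, ih]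
  have gwf : WellFounded (fun u v => g u = v) := by
    refine Subrelation.wf (r := InvImage (fun u v => f u = v) Subtype.val) ?_ (InvImage.wf _ wf)
    intro u v h
    exact congrArg Subtype.val h
  have gf : ∀ v, {u | g u = v}.Finite := by
    intro v
    refine ((hf v.1).preimage (Subtype.val_injective.injOn (s := Set.preimage Subtype.val {u | f u = v.1}))).subset ?_
    intro u h
    exact congrArg Subtype.val h
  obtain ⟨q, hq1, hq2⟩ := pccc_group g gwf gf F'.ncard hMpos
  let q' : V → Option ({v // v ∉ F'} × ℕ) := fun v => if h : v ∈ F' then none else some (q ⟨v, h⟩)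
  have hqn : ∀ v, q' v = none ↔ v ∈ F' := by
    intro v
    by_cases h : v ∈ F' <;> simp [q', h]
  have hqs : ∀ v (h : v ∉ F'), q' v = some (q ⟨v, h⟩) := by
    intro v h
    simp [q', h]
  refine ⟨Setoid.ker q', F'.ncard, F', hMpos, hF'fin, ?_, ?_, ?_⟩
  · intro v
    by_cases h : v ∈ F'
    · congr 1
      ext w
      change q' v = q' w ↔ _
      rw [(hqn v).2 h, ← hqn w]
      exact eq_comm
    · rw [← hq1 ⟨v, h⟩, ← Set.ncard_image_of_injective _ Subtype.val_injective]
      congr 1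
      ext w
      change q' v = q' w ↔ _
      rw [hqs v h]
      constructor
      · intro hw
        have hwF : w ∉ F' := by
          intro hh
          rw [(hqn w).2 hh] at hw
          cases hw
        rw [hqs w hwF] at hw
        exact ⟨⟨w, hwF⟩, (Option.some.inj hw).symm, rfl⟩
      · rintro ⟨u, hu, rfl⟩
        rw [hqs u.1 u.2]
        exact congrArg some (Eq.symm hu)
  · intro v hv w hw
    change q' v = q' w
    rw [(hqn v).2 (hFF v hv), (hqn w).2 (hFF w hw)]
  · intro v w h
    replace h : q' v = q' w := h
    by_cases hv : v ∈ F'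
    · rw [(hqn v).2 hv] at h
      exact Or.inl ⟨hv, (hqn w).1 h.symm⟩
    · right
      have hw : w ∉ F' := by
        intro hh
        rw [(hqn w).2 hh] at h
        exact hv ((hqn v).1 h)
      rw [hqs v hv, hqs w hw] at h
      obtain ⟨i, j, hi, hj, hij⟩ := hq2 _ _ (Option.some.inj h)
      refine ⟨i, j, hi, hj, ?_⟩
      have := congrArg Subtype.val hij
      rwa [hgi, hgi] at this

theorem pccc_fiber_card {A B : Type*} (φ : A → B) (s : Set B) (hs : s.Finite) (m : ℕ) (hm : 0 < m)
    (h : ∀ a, {x | φ x = φ a}.ncard = m) (hsurj : Function.Surjective φ) :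
    (φ ⁻¹' s).ncard = s.ncard * m := by
  classical
  have hfib : ∀ b, (φ ⁻¹' {b}).ncard = m := by
    intro b
    obtain ⟨a, rfl⟩ := hsurj b
    exact h a
  have hfin : (φ ⁻¹' s).Finite :=
    hs.preimage' fun b _ => Set.finite_of_ncard_pos (by rw [hfib]; exact hm)
  rw [Set.ncard_eq_toFinset_card _ hfin, Set.ncard_eq_toFinset_card _ hs,
    Finset.card_eq_sum_card_fiberwise (f := φ) (t := hs.toFinset) (by intro x hx; simpa using hx)]
  apply Finset.sum_const_nat
  intro b hb
  rw [← hfib b, ← Set.ncard_coe_finset]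
  congr 1
  ext x
  simp at hb ⊢
  rintro rfl
  exact hb

/-- Setoids with classes of constant finite size and uniformly bounded shape. -/
def PcccStage (G : Type*) [Group G] (r : Setoid G) : Prop :=
  (∃ B : Set G, B.Finite ∧ ∀ g h, r g h → g⁻¹ * h ∈ B) ∧
    ∃ m : ℕ, 0 < m ∧ ∀ g, {h | r g h}.ncard = m

theorem pccc_step (G : Type*) [Group G] [Group.FG G] (r : Setoid G) (hr : PcccStage G r) (a : G) :
    ∃ r' : Setoid G, PcccStage G r' ∧ r ≤ r' ∧ r' 1 a := by
  classical
  rcases finite_or_infinite G with hG | hG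
  · refine ⟨⊤, ⟨⟨Set.univ, Set.finite_univ, fun _ _ _ => trivial⟩, Nat.card G, Nat.card_pos, ?_⟩,
      le_top, trivial⟩
    intro g
    rw [← Set.ncard_univ]
    congr 1
  obtain ⟨⟨B, hB, hrB⟩, m, hm, hrm⟩ := hr
  obtain ⟨S0, hS0⟩ := Group.FG.out (G := G)
  set S : Set G := (S0 : Set G) ∪ (S0 : Set G)⁻¹ with hS
  have hSf : S.Finite := S0.finite_toSet.union S0.finite_toSet.inv
  have hSi : ∀ s ∈ S, s⁻¹ ∈ S := by
    rintro s (h | h)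
    · right; simpa using h
    · left; simpa using h
  let mk : G → Quotient r := Quotient.mk r
  have hmk : ∀ x y, mk x = mk y ↔ r x y := fun x y => Quotient.eq
  have hsurj : Function.Surjective mk := Quotient.mk_surjective
  have hfib : ∀ x, {y | mk y = mk x}.ncard = m := by
    intro x
    rw [← hrm x]
    congr 1
    ext y
    exact (hmk y x).trans ⟨fun h => r.symm h, fun h => r.symm h⟩
  have hfib' : ∀ b, (mk ⁻¹' {b}).Finite := by
    intro b
    obtain ⟨x, rfl⟩ := hsurj b
    exact Set.finite_of_ncard_pos (by rw [show (mk ⁻¹' {mk x}).ncard = m from hfib x]; exact hm)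
  have hVinf : Infinite (Quotient r) := by
    by_contra hcon
    rw [not_infinite_iff_finite] at hcon
    have : (mk ⁻¹' Set.univ).Finite := Set.finite_univ.preimage' fun b _ => hfib' b
    rw [Set.preimage_univ] at this
    exact Set.infinite_univ this
  let H : SimpleGraph (Quotient r) :=
    { Adj := fun u v => u ≠ v ∧ ∃ x y, mk x = u ∧ mk y = v ∧ x⁻¹ * y ∈ S
      symm := ⟨by
        rintro u v ⟨h, x, y, hx, hy, hs⟩
        refine ⟨h.symm, y, x, hy, hx, ?_⟩
        have := hSi _ hs
        simpa using this⟩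
      loopless := ⟨fun u h => h.1 rfl⟩ }
  have hreach : ∀ g x, H.Reachable (mk x) (mk (x * g)) := by
    intro g
    have hg : g ∈ Subgroup.closure (S0 : Set G) := by rw [hS0]; trivial
    induction hg using Subgroup.closure_induction with
    | mem s hs =>
      intro x
      by_cases h : mk x = mk (x * s)
      · rw [← h]
      · apply SimpleGraph.Adj.reachable
        refine ⟨h, x, x * s, rfl, rfl, ?_⟩
        left; simpa using hs
    | one => intro x; rw [mul_one]
    | mul g h _ _ ihg ihh =>
      intro x
      rw [← mul_assoc]
      exact (ihg x).trans (ihh (x * g))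
    | inv g _ ih =>
      intro x
      have := ih (x * g⁻¹)
      rw [inv_mul_cancel_right] at this
      exact this.symm
  have hc : H.Connected := by
    have : Nonempty (Quotient r) := ⟨mk 1⟩
    refine ⟨?_⟩
    intro u v
    obtain ⟨x, rfl⟩ := hsurj u
    obtain ⟨y, rfl⟩ := hsurj v
    have := hreach (x⁻¹ * y) x
    rwa [mul_inv_cancel_left] at this
  have hadj : ∀ x y, H.Adj (mk x) (mk y) → x⁻¹ * y ∈ B * S * B := by
    rintro x y ⟨-, x', y', hx, hy, hs⟩
    have h1 := hrB _ _ (r.symm ((hmk _ _).1 hx))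
    have h2 := hrB _ _ ((hmk _ _).1 hy)
    have := Set.mul_mem_mul (Set.mul_mem_mul h1 hs) h2
    have he : x⁻¹ * x' * (x'⁻¹ * y') * (y'⁻¹ * y) = x⁻¹ * y := by group
    rwa [he] at this
  have hBSB : (B * S * B).Finite := (hB.mul hSf).mul hB
  have hlf : ∀ v, {u | H.Adj v u}.Finite := by
    intro v
    obtain ⟨x, rfl⟩ := hsurj v
    refine (hBSB.image fun b => mk (x * b)).subset ?_
    intro u hu
    obtain ⟨y, rfl⟩ := hsurj u
    exact ⟨x⁻¹ * y, hadj x y hu, by simp⟩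
  obtain ⟨f, hfadj, wf⟩ := pccc_forest H hc hlf
  have hff : ∀ v, {u | f u = v}.Finite := by
    intro v
    refine (hlf v).subset ?_
    rintro u rfl
    exact (hfadj u).symm
  obtain ⟨t, M, F', hM, hF', htM, htF, ht⟩ := pccc_group_first f wf hff {mk 1, mk a}
    (Set.toFinite _) ⟨mk 1, by simp⟩
  have hC : ∀ i, ∃ C : Set G, C.Finite ∧ ∀ x y, f^[i] (mk x) = mk y → x⁻¹ * y ∈ C := by
    intro i
    induction i with
    | zero => exact ⟨B, hB, fun x y h => hrB _ _ ((hmk _ _).1 h)⟩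
    | succ i ih =>
      obtain ⟨C, hCf, hC⟩ := ih
      refine ⟨B * S * B * C, hBSB.mul hCf, ?_⟩
      intro x y h
      obtain ⟨z, hz⟩ := hsurj (f (mk x))
      rw [Function.iterate_succ_apply, ← hz] at h
      have h1 := hfadj (mk x)
      rw [← hz] at h1
      have := Set.mul_mem_mul (hadj _ _ h1) (hC _ _ h)
      have he : x⁻¹ * z * (z⁻¹ * y) = x⁻¹ * y := by group
      rwa [he] at this
  choose C hCf hC using hC
  have hPf : (mk ⁻¹' F').Finite := hF'.preimage' fun b _ => hfib' b
  refine ⟨t.comap mk, ⟨⟨(mk ⁻¹' F')⁻¹ * (mk ⁻¹' F') ∪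
    ⋃ i ∈ Set.Iic M, ⋃ j ∈ Set.Iic M, C i * (C j)⁻¹, ?_, ?_⟩, M * m, Nat.mul_pos hM hm, ?_⟩, ?_, ?_⟩
  · refine (hPf.inv.mul hPf).union ?_
    refine (Set.finite_Iic M).biUnion fun i _ => (Set.finite_Iic M).biUnion fun j _ => ?_
    exact (hCf i).mul (hCf j).inv
  · intro x y h
    rcases ht (mk x) (mk y) h with ⟨h1, h2⟩ | ⟨i, j, hi, hj, hij⟩
    · left
      exact Set.mul_mem_mul (Set.inv_mem_inv.2 h1) h2
    · right
      simp only [Set.mem_iUnion]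
      refine ⟨i, hi, j, hj, ?_⟩
      obtain ⟨z, hz⟩ := hsurj (f^[i] (mk x))
      have h1 := hC i x z hz.symm
      have h2 := hC j y z (hij.symm.trans hz.symm)
      have := Set.mul_mem_mul h1 (Set.inv_mem_inv.2 h2)
      have he : x⁻¹ * z * (y⁻¹ * z)⁻¹ = x⁻¹ * y := by group
      rwa [he] at this
  · intro g
    rw [← htM (mk g)]
    exact pccc_fiber_card mk {w | t (mk g) w}
      (Set.finite_of_ncard_pos (by rw [htM]; exact hM)) m hm hfib hsurj
  · intro x y h
    change t (mk x) (mk y)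
    rw [(hmk x y).2 h]
  · exact htF (mk 1) (by simp) (mk a) (by simp)

theorem pccc_polytiling (G : Type*) [Group G] (r : Setoid G) (hr : PcccStage G r) :
    ∃ P : Polytiling G, P.Fair ∧ (1 : G) ∈ P.Δ P.fst ∧ (P.T P.fst : Set G) = {h | r 1 h} ∧
      ∀ A, A ∈ P.pieces ↔ ∃ g, A = {h | r g h} := by
  classical
  obtain ⟨⟨B, hB, hrB⟩, m, hm, hrm⟩ := hr
  -- representatives
  obtain ⟨c, hc, hcc, hc1⟩ : ∃ c : G → G, (∀ g, r g (c g)) ∧ (∀ g h, r g h → c g = c h) ∧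
      c 1 = 1 := by
    refine ⟨fun g => if r 1 g then 1 else (Quotient.mk r g).out, ?_, ?_, ?_⟩
    · intro g
      by_cases h : r 1 g
      · simp only [h, if_true]; exact r.symm h
      · simp only [h, if_false]; exact r.symm (Quotient.mk_out (s := r) g)
    · intro g h hgh
      have : r 1 g ↔ r 1 h := ⟨fun k => r.trans k hgh, fun k => r.trans k (r.symm hgh)⟩
      have e : Quotient.mk r g = Quotient.mk r h := Quotient.sound hgh
      simp only [this, e]
    · simp [r.refl 1]
  have hfin : ∀ g, {h | r g (g * h)}.Finite := by
    intro g
    refine hB.subset ?_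
    intro h hh
    have := hrB _ _ hh
    rwa [inv_mul_cancel_left] at this
  let sh : G → Finset G := fun g => (hfin g).toFinset
  have hsh : ∀ g h, h ∈ sh g ↔ r g (g * h) := by
    intro g h; simp [sh]
  have hcls : ∀ g, g • (sh g : Set G) = {h | r g h} := by
    intro g
    ext x
    rw [Set.mem_smul_set_iff_inv_smul_mem, Finset.mem_coe, hsh, smul_eq_mul, mul_inv_cancel_left]
    rfl
  have hcard : ∀ g, (sh g).card = m := by
    intro g
    rw [← hrm g, ← hcls g, Set.ncard_smul_set, Set.ncard_coe_finset]
  have hSfin : (sh '' Set.range c).Finite := by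
    refine (hB.toFinset.powerset.finite_toSet).subset ?_
    rintro _ ⟨g, -, rfl⟩
    simp only [Finset.coe_powerset, Set.mem_preimage, Set.mem_powerset_iff]
    intro h hh
    have := hrB _ _ ((hsh _ _).1 hh)
    rw [inv_mul_cancel_left] at this
    simpa using this
  have := hSfin.fintype
  let Y := (sh '' Set.range c : Set (Finset G))
  let y0 : Y := ⟨sh 1, 1, ⟨1, hc1⟩, rfl⟩
  have hpos : 0 < Fintype.card Y := Fintype.card_pos_iff.2 ⟨y0⟩
  obtain ⟨e, he⟩ : ∃ e : Fin (Fintype.card Y) ≃ Y, e ⟨0, hpos⟩ = y0 := by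
    let e0 : Fin (Fintype.card Y) ≃ Y := (Fintype.equivFin Y).symm
    refine ⟨(Equiv.swap ⟨0, hpos⟩ (e0.symm y0)).trans e0, ?_⟩
    simp
  let P : Polytiling G :=
    { k := Fintype.card Y
      k_pos := hpos
      T := fun i => (e i).1
      Δ := fun i => {d | d ∈ Set.range c ∧ sh d = (e i).1}
      one_mem := by
        intro i
        obtain ⟨g, hg, hgi⟩ := (e i).2
        rw [← hgi, hsh, mul_one]
      delta_nonempty := by
        intro i
        obtain ⟨g, hg, hgi⟩ := (e i).2
        exact ⟨g, hg, hgi⟩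
      covers := by
        intro g
        have hy : sh (c g) ∈ Y := ⟨c g, ⟨g, rfl⟩, rfl⟩
        refine ⟨e.symm ⟨sh (c g), hy⟩, c g, ⟨⟨g, rfl⟩, by simp⟩, ?_⟩
        rw [Equiv.apply_symm_apply, hcls]
        exact r.symm (hc g)
      disj := by
        rintro i j d ⟨⟨x, hx⟩, hd⟩ d' ⟨⟨x', hx'⟩, hd'⟩ hne
        rw [← hd, ← hd', hcls, hcls, Set.disjoint_left]
        intro z hz hz'
        apply hne
        have h1 : r x x' := by
          have h2 : r x d := hx ▸ hc x
          have h3 : r x' d' := hx' ▸ hc x'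
          exact r.trans (r.trans h2 hz) (r.symm (r.trans h3 hz'))
        have h2 : d = d' := by rw [← hx, ← hx']; exact hcc _ _ h1
        subst h2
        have : i = j := e.injective (Subtype.ext (hd.symm.trans hd'))
        rw [this] }
  have hT0 : P.T P.fst = sh 1 := congrArg Subtype.val he
  refine ⟨P, ?_, ?_, ?_, ?_⟩
  · have : ∀ i, (P.T i).card = m := by
      intro i
      obtain ⟨g, hg, hgi⟩ := (e i).2
      change (e i).1.card = m
      rw [← hgi, hcard]
    intro i j
    rw [this, this]
  · exact ⟨⟨1, hc1⟩, hT0.symm⟩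
  · rw [hT0, ← hcls 1, one_smul]
  · intro A
    constructor
    · rintro ⟨i, d, ⟨-, hd⟩, rfl⟩
      refine ⟨d, ?_⟩
      rw [← hcls d, hd]
    · rintro ⟨g, rfl⟩
      have hy : sh (c g) ∈ Y := ⟨c g, ⟨g, rfl⟩, rfl⟩
      refine ⟨e.symm ⟨sh (c g), hy⟩, c g, ⟨⟨g, rfl⟩, by simp⟩, ?_⟩
      change _ = c g • ((e (e.symm ⟨sh (c g), hy⟩)).1 : Set G)
      rw [Equiv.apply_symm_apply, hcls]
      ext h
      exact ⟨fun k => r.trans (r.symm (hc g)) k, fun k => r.trans (hc g) k⟩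

/-- Every finitely generated group is poly-ccc: it admits a centered, cofinal, coherent
sequence of fair polytilings. -/
theorem fg_group_is_poly_ccc (G : Type*) [Group G] [Group.FG G] :
    ∃ P : ℕ → Polytiling G,
      (∀ n, (P n).Fair) ∧
      (∀ n, (1 : G) ∈ (P n).Δ (P n).fst) ∧
      (∀ n, ((P n).T (P n).fst : Set G) ⊆ ((P (n + 1)).T ((P (n + 1)).fst) : Set G)) ∧
      (∀ g : G, ∃ n, g ∈ (P n).T (P n).fst) ∧
      (∀ n, ∀ A ∈ (P n).pieces, ∃ B ∈ (P (n + 1)).pieces, A ⊆ B) := by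
  have : Countable G := by
    obtain ⟨S0, hfin, φ, hφ⟩ := Group.fg_iff_exists_freeGroup_hom_surjective.1 ‹Group.FG G›
    have := hfin.countable.to_subtype
    exact hφ.countable
  obtain ⟨e, he⟩ := exists_surjective_nat G
  have h0 : PcccStage G ⊥ := by
    refine ⟨⟨{1}, Set.finite_singleton _, ?_⟩, 1, one_pos, ?_⟩
    · intro g h hgh
      have : g = h := hgh
      simp [this]
    · intro g
      rw [Set.ncard_eq_one]
      refine ⟨g, ?_⟩
      ext h
      exact eq_comm (a := g)
  choose nx hnx1 hnx2 hnx3 using fun (r : {r : Setoid G // PcccStage G r}) (a : G) =>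
    pccc_step G r.1 r.2 a
  let R : ℕ → {r : Setoid G // PcccStage G r} := fun n =>
    Nat.rec ⟨⊥, h0⟩ (fun n r => ⟨nx r (e n), hnx1 r (e n)⟩) n
  have hRle : ∀ n, (R n).1 ≤ (R (n + 1)).1 := fun n => hnx2 (R n) (e n)
  have hRe : ∀ n, (R (n + 1)).1 1 (e n) := fun n => hnx3 (R n) (e n)
  choose P hP1 hP2 hP3 hP4 using fun n => pccc_polytiling G (R n).1 (R n).2
  refine ⟨P, hP1, hP2, ?_, ?_, ?_⟩
  · intro n
    rw [hP3, hP3]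
    intro h hh
    exact hRle n hh
  · intro g
    obtain ⟨n, rfl⟩ := he g
    refine ⟨n + 1, ?_⟩
    rw [← Finset.mem_coe, hP3]
    exact hRe n
  · intro n A hA
    obtain ⟨g, rfl⟩ := (hP4 n A).1 hA
    refine ⟨_, (hP4 (n + 1) _).2 ⟨g, rfl⟩, ?_⟩
    intro h hh
    exact hRle n hh
end

section
/- Every countable group G is poly-MT: for every finite subset F ⊆ G there is a fair polytile (T₁,…,T_k) of G with F ⊆ T₁. -/
open scoped Pointwise

section Tree
variable {α : Type*} [DecidableEq α] (f : α → α) (d : α → ℕ) (r : α)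

theorem pmt_d_iter (hd : ∀ x, d (f x) = d x - 1) (k : ℕ) (x : α) :
    d (f^[k] x) = d x - k := by
  induction k with
  | zero => simp
  | succ k ih => rw [Function.iterate_succ_apply', hd, ih]; omega

/-- A finite `f`-closed set of size at least `n` contains a removable localized `n`-set. -/
theorem pmt_cut (hd : ∀ x, d (f x) = d x - 1) (hr : ∀ x, d x = 0 ↔ x = r)
    (n : ℕ) (hn : 0 < n) (L : Finset α) (hL : ∀ x ∈ L, f x ∈ L) (hc : n ≤ L.card) :
    ∃ P ⊆ L, P.card = n ∧ (∀ x ∈ L \ P, f x ∈ L \ P) ∧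
      ∃ v, ∀ x ∈ P, ∃ k ≤ n, f^[k] x = v := by
  classical
  have hit : ∀ k, ∀ x ∈ L, f^[k] x ∈ L := by
    intro k
    induction k with
    | zero => simp
    | succ k ih => intro x hx; rw [Function.iterate_succ_apply']; exact hL _ (ih x hx)
  have hne : L.Nonempty := Finset.card_pos.1 (by omega)
  obtain ⟨x0, hx0, hmax⟩ := Finset.exists_max_image L d hne
  set v := f^[n] x0 with hv
  have hdv : d v = d x0 - n := pmt_d_iter f d hd n x0
  set B := L.filter (fun x => ∃ k ≤ n, f^[k] x = v) with hB
  have hBcard : n ≤ B.card := by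
    by_cases h : d x0 ≤ n
    · have : B = L := by
        apply Finset.filter_true_of_mem
        intro x hx
        refine ⟨n, le_rfl, ?_⟩
        have h1 : f^[n] x = r := (hr _).1 (by rw [pmt_d_iter f d hd]; have := hmax x hx; omega)
        have h2 : v = r := (hr _).1 (by omega)
        rw [h1, h2]
      rw [this]; exact hc
    · have hinj : Set.InjOn (fun k => f^[k] x0) (Finset.range n : Set ℕ) := by
        intro a ha b hb hab
        have := congrArg d hab
        simp only [pmt_d_iter f d hd] at this
        simp at ha hb
        omega
      have h3 : (Finset.range n).image (fun k => f^[k] x0) ⊆ B := by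
        intro y hy
        obtain ⟨k, hk, rfl⟩ := Finset.mem_image.1 hy
        have hk := Finset.mem_range.1 hk
        refine Finset.mem_filter.2 ⟨hit k x0 hx0, n - k, by omega, ?_⟩
        rw [← Function.iterate_add_apply, hv]
        congr 2
        omega
      have := Finset.card_le_card h3
      rwa [Finset.card_image_of_injOn hinj, Finset.card_range] at this
  have hBdown : ∀ x ∈ L, x ≠ r → f x ∈ B → x ∈ B := by
    intro x hx hxr hfx
    obtain ⟨_, j, hj, hjv⟩ := Finset.mem_filter.1 hfx
    refine Finset.mem_filter.2 ⟨hx, ?_⟩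
    rw [← Function.iterate_succ_apply] at hjv
    by_cases hjn : j + 1 ≤ n
    · exact ⟨j + 1, hjn, hjv⟩
    · have hm := hmax x hx
      have h1 := congrArg d hjv
      rw [pmt_d_iter f d hd] at h1
      have h2 : v = r := (hr _).1 (by omega)
      have h3 : f^[n] x = r := (hr _).1 (by rw [pmt_d_iter f d hd]; omega)
      exact ⟨n, le_rfl, by rw [h2, h3]⟩
  have key : ∀ m ≤ B.card, ∃ P ⊆ B, P.card = m ∧ ∀ x ∈ L, x ≠ r → f x ∈ P → x ∈ P := by
    intro m
    induction m with
    | zero => intro _; exact ⟨∅, by simp, by simp, by simp⟩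
    | succ m ih =>
      intro hm
      obtain ⟨Q, hQB, hQc, hQ⟩ := ih (by omega)
      have hne : (B \ Q).Nonempty := by
        rw [← Finset.card_pos, Finset.card_sdiff_of_subset hQB]; omega
      obtain ⟨q, hq, hqmax⟩ := Finset.exists_max_image (B \ Q) d hne
      have hq' := Finset.mem_sdiff.1 hq
      refine ⟨insert q Q, Finset.insert_subset hq'.1 hQB, ?_, ?_⟩
      · rw [Finset.card_insert_of_notMem hq'.2, hQc]
      · intro x hx hxr hfx
        rcases Finset.mem_insert.1 hfx with h | h
        · have hxB : x ∈ B := hBdown x hx hxr (h ▸ hq'.1)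
          by_contra hxQ
          have h1 : x ∉ Q := fun h' => hxQ (Finset.mem_insert_of_mem h')
          have h2 := hqmax x (Finset.mem_sdiff.2 ⟨hxB, h1⟩)
          have h3 := hd x
          rw [h] at h3
          have h4 : d x ≠ 0 := fun h' => hxr ((hr x).1 h')
          omega
        · exact Finset.mem_insert_of_mem (hQ x hx hxr h)
  obtain ⟨P, hPB, hPc, hP⟩ := key n hBcard
  have hBL : B ⊆ L := Finset.filter_subset _ _
  refine ⟨P, hPB.trans hBL, hPc, ?_, v, ?_⟩
  · intro x hx
    have hx' := Finset.mem_sdiff.1 hx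
    by_cases hxr : x = r
    · have : f x = x := by
        rw [hxr]; apply (hr _).1; rw [hd, (hr r).2 rfl]
      rwa [this]
    · exact Finset.mem_sdiff.2 ⟨hL x hx'.1, fun h => hx'.2 (hP x hx'.1 hxr h)⟩
  · intro x hx
    exact (Finset.mem_filter.1 (hPB hx)).2

/-- Partition of a finite `f`-closed set into localized `n`-sets and a small part at the root. -/
theorem pmt_finite (hd : ∀ x, d (f x) = d x - 1) (hr : ∀ x, d x = 0 ↔ x = r)
    (n : ℕ) (hn : 0 < n) : ∀ (m : ℕ) (L : Finset α), L.card = m → (∀ x ∈ L, f x ∈ L) →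
    ∃ PP : Set (Finset α), PP.PairwiseDisjoint id ∧
      (∀ P ∈ PP, P ⊆ L ∧ P.card = n ∧ ∃ v, ∀ x ∈ P, ∃ k ≤ n, f^[k] x = v) ∧
      ∀ x ∈ L, n ≤ d x → ∃ P ∈ PP, x ∈ P := by
  intro m
  induction m using Nat.strong_induction_on with
  | _ m ih =>
  intro L hLm hL
  by_cases hc : n ≤ L.card
  · obtain ⟨P, hPL, hPc, hPcl, hPv⟩ := pmt_cut f d r hd hr n hn L hL hc
    obtain ⟨PP, h1, h2, h3⟩ := ih (L \ P).card
      (by rw [Finset.card_sdiff_of_subset hPL]; omega) (L \ P) rfl hPcl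
    have hdis : ∀ Q ∈ PP, Disjoint Q P := fun Q hQ =>
      Finset.disjoint_of_subset_left (h2 Q hQ).1 Finset.sdiff_disjoint
    refine ⟨insert P PP, ?_, ?_, ?_⟩
    · apply h1.insert
      intro Q hQ _
      exact (hdis Q hQ).symm
    · rintro Q (rfl | hQ)
      · exact ⟨hPL, hPc, hPv⟩
      · exact ⟨(h2 Q hQ).1.trans Finset.sdiff_subset, (h2 Q hQ).2⟩
    · intro x hx hdx
      by_cases hxP : x ∈ P
      · exact ⟨P, Set.mem_insert _ _, hxP⟩
      · obtain ⟨Q, hQ, hxQ⟩ := h3 x (Finset.mem_sdiff.2 ⟨hx, hxP⟩) hdx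
        exact ⟨Q, Set.mem_insert_of_mem _ hQ, hxQ⟩
  · refine ⟨∅, by simp, by simp, ?_⟩
    intro x hx hdx
    exfalso
    have hit : ∀ k, f^[k] x ∈ L := by
      intro k
      induction k with
      | zero => simpa
      | succ k ih => rw [Function.iterate_succ_apply']; exact hL _ ih
    have hinj : Set.InjOn (fun k => f^[k] x) (Finset.range n : Set ℕ) := by
      intro a ha b hb hab
      have := congrArg d hab
      simp only [pmt_d_iter f d hd] at this
      simp at ha hb
      omega
    have h3 : (Finset.range n).image (fun k => f^[k] x) ⊆ L := by
      intro y hy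
      obtain ⟨k, hk, rfl⟩ := Finset.mem_image.1 hy
      exact hit k
    have := Finset.card_le_card h3
    rw [Finset.card_image_of_injOn hinj, Finset.card_range] at this
    omega
end Tree

/-- Local form: some relation has bounded classes of size `n` at all points of `K`. -/
theorem pmt_local {H : Type*} [Group H] [Infinite H] [DecidableEq H] (S : Finset H)
    (h1 : (1 : H) ∈ S) (hS : ∀ x : H, ∃ k : ℕ, x ∈ S ^ k) (n : ℕ) (hn : 0 < n) (K : Finset H) :
    ∃ r : Setoid H, ∀ x ∈ K, {y | r x y}.ncard = n ∧ ∀ y, r x y → x⁻¹ * y ∈ (S ^ n)⁻¹ * S ^ n := by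
  classical
  let d : H → ℕ := fun x => Nat.find (hS x)
  have hdmem : ∀ x, x ∈ S ^ d x := fun x => Nat.find_spec (hS x)
  have hdle : ∀ x k, x ∈ S ^ k → d x ≤ k := fun x k h => Nat.find_min' (hS x) h
  have hmono : ∀ {a b : ℕ}, a ≤ b → S ^ a ⊆ S ^ b := fun h => Finset.pow_subset_pow_right h1 h
  have hr : ∀ x, d x = 0 ↔ x = 1 := by
    intro x
    constructor
    · intro h
      have := hdmem x
      rw [h] at this
      simpa using this
    · rintro rfl
      have := hdle 1 0 (by simp)
      omega
  have hpar : ∀ x, ∃ y, d y = d x - 1 ∧ ∃ s ∈ S, y * s = x := by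
    intro x
    by_cases hx : d x = 0
    · exact ⟨x, by omega, 1, h1, by simp⟩
    · obtain ⟨k, hk⟩ := Nat.exists_eq_succ_of_ne_zero hx
      have := hdmem x
      rw [hk, Nat.succ_eq_add_one, pow_succ] at this
      obtain ⟨y, hy, s, hs, rfl⟩ := Finset.mem_mul.1 this
      refine ⟨y, ?_, s, hs, rfl⟩
      have h2 := hdle y k hy
      have h3 := hdle (y * s) (d y + 1) (by rw [pow_succ]; exact Finset.mul_mem_mul (hdmem y) hs)
      omega
  choose f hfd hfs using hpar
  have hfk : ∀ k x, ∃ s ∈ S ^ k, f^[k] x * s = x := by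
    intro k
    induction k with
    | zero => intro x; exact ⟨1, by simp, by simp⟩
    | succ k ih =>
      intro x
      obtain ⟨s, hs, hsx⟩ := ih (f x)
      obtain ⟨t, ht, htx⟩ := hfs x
      refine ⟨s * t, by rw [pow_succ]; exact Finset.mul_mem_mul hs ht, ?_⟩
      rw [Function.iterate_succ_apply, ← mul_assoc, hsx, htx]
  obtain ⟨g, hg⟩ := Infinite.exists_notMem_finset (K * (S ^ n)⁻¹)
  set N := K.sup (fun x => d (g⁻¹ * x)) with hN
  obtain ⟨PP, hdis, hP, hcov⟩ := pmt_finite f d 1 hfd hr n hn _ (S ^ N) rfl (by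
    intro x hx
    have := hdle x N hx
    exact hmono (by have := hfd x; omega) (hdmem (f x)))
  let r : Setoid H :=
    { r := fun x y => x = y ∨ ∃ P ∈ PP, g⁻¹ * x ∈ P ∧ g⁻¹ * y ∈ P
      iseqv := by
        refine ⟨fun _ => Or.inl rfl, ?_, ?_⟩
        · rintro x y (rfl | ⟨P, h, h', h''⟩)
          · exact Or.inl rfl
          · exact Or.inr ⟨P, h, h'', h'⟩
        · rintro x y z (rfl | ⟨P, hp, h', h''⟩) (rfl | ⟨Q, hq, k', k''⟩)
          · exact Or.inl rfl
          · exact Or.inr ⟨Q, hq, k', k''⟩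
          · exact Or.inr ⟨P, hp, h', h''⟩
          · have : P = Q := hdis.elim_finset hp hq _ h'' k'
            subst this
            exact Or.inr ⟨P, hp, h', k''⟩ }
  refine ⟨r, ?_⟩
  intro x hx
  have hxN : g⁻¹ * x ∈ S ^ N :=
    hmono (Finset.le_sup (f := fun x => d (g⁻¹ * x)) hx) (hdmem (g⁻¹ * x))
  have hxn : n ≤ d (g⁻¹ * x) := by
    by_contra hlt
    apply hg
    have h2 : g⁻¹ * x ∈ S ^ n := hmono (by omega) (hdmem (g⁻¹ * x))
    refine Finset.mem_mul.2 ⟨x, hx, (g⁻¹ * x)⁻¹, Finset.inv_mem_inv h2, by group⟩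
  obtain ⟨P, hPm, hxP⟩ := hcov _ hxN hxn
  obtain ⟨_, hPc, v, hv⟩ := hP P hPm
  have hcls : ∀ y, r x y ↔ g⁻¹ * y ∈ P := by
    intro y
    constructor
    · rintro (rfl | ⟨Q, hQ, k', k''⟩)
      · exact hxP
      · have : P = Q := hdis.elim_finset hPm hQ _ hxP k'
        subst this
        exact k''
    · intro hy
      exact Or.inr ⟨P, hPm, hxP, hy⟩
  constructor
  · have : {y | r x y} = ((P.image (fun z => g * z) : Finset H) : Set H) := by
      ext y
      simp only [Set.mem_ofPred_eq, hcls, Finset.coe_image, Set.mem_image, Finset.mem_coe]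
      constructor
      · intro h; exact ⟨_, h, by group⟩
      · rintro ⟨z, hz, rfl⟩; simpa using hz
    rw [this, Set.ncard_coe_finset, Finset.card_image_of_injective _ (mul_right_injective g), hPc]
  · intro y hy
    rw [hcls] at hy
    obtain ⟨a, ha, hav⟩ := hv _ hxP
    obtain ⟨b, hb, hbv⟩ := hv _ hy
    obtain ⟨s, hs, hsx⟩ := hfk a (g⁻¹ * x)
    obtain ⟨t, ht, hty⟩ := hfk b (g⁻¹ * y)
    rw [hav] at hsx
    rw [hbv] at hty
    refine Finset.mem_mul.2 ⟨s⁻¹, Finset.inv_mem_inv (hmono ha hs), t, hmono hb ht, ?_⟩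
    have e1 : x = g * (v * s) := by rw [hsx]; group
    have e2 : y = g * (v * t) := by rw [hty]; group
    rw [e1, e2]; group

/-- Compactness via an ultrafilter. -/
theorem pmt_compact {H : Type*} [Group H] [DecidableEq H] (B : Finset H) (n : ℕ)
    (h : ∀ K : Finset H, ∃ r : Setoid H, ∀ x ∈ K, {y | r x y}.ncard = n ∧
      ∀ y, r x y → x⁻¹ * y ∈ B) :
    ∃ r : Setoid H, ∀ x, {y | r x y}.ncard = n ∧ ∀ y, r x y → x⁻¹ * y ∈ B := by
  classical
  choose R hR using h
  let U : Ultrafilter (Finset H) := Ultrafilter.of Filter.atTop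
  have hU : ∀ x : H, ∀ᶠ K in (U : Filter (Finset H)), x ∈ K := by
    intro x
    apply Ultrafilter.of_le (f := (Filter.atTop : Filter (Finset H)))
    filter_upwards [Filter.eventually_ge_atTop ({x} : Finset H)] with K hK
    exact hK (Finset.mem_singleton_self x)
  let r : Setoid H :=
    { r := fun x y => ∀ᶠ K in (U : Filter (Finset H)), R K x y
      iseqv := by
        refine ⟨fun x => Filter.Eventually.of_forall fun K => (R K).refl x, ?_, ?_⟩
        · intro x y hxy
          filter_upwards [hxy] with K hK using (R K).symm hK
        · intro x y z hxy hyz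
          filter_upwards [hxy, hyz] with K hK hK' using (R K).trans hK hK' }
  have hrdef : ∀ x y, r x y ↔ ∀ᶠ K in (U : Filter (Finset H)), R K x y := fun _ _ => Iff.rfl
  have hb : ∀ x y, r x y → x⁻¹ * y ∈ B := by
    intro x y hxy
    obtain ⟨K, hK, hxK⟩ := (((hrdef x y).1 hxy).and (hU x)).exists
    exact (hR K x hxK).2 y hK
  refine ⟨r, fun x => ⟨?_, hb x⟩⟩
  have hev : ∀ b ∈ B, ∀ᶠ K in (U : Filter (Finset H)), (R K x (x * b) ↔ r x (x * b)) := by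
    intro b _
    by_cases hxb : r x (x * b)
    · filter_upwards [(hrdef _ _).1 hxb] with K hK
      exact iff_of_true hK hxb
    · have := Ultrafilter.eventually_not.2 (fun h' => hxb ((hrdef _ _).2 h'))
      filter_upwards [this] with K hK
      exact iff_of_false hK hxb
  obtain ⟨K, hK, hxK⟩ := (((Filter.eventually_all_finset B).2 hev).and (hU x)).exists
  rw [← (hR K x hxK).1]
  congr 1
  ext y
  have hy : x * (x⁻¹ * y) = y := by group
  constructor
  · intro h'
    have := (hK _ (hb x y h')).2
    rw [hy] at this
    exact this h'
  · intro hxy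
    have := (hK _ ((hR K x hxK).2 y hxy)).1
    rw [hy] at this
    exact this hxy

/-- Passing from a subgroup to the whole group. -/
theorem pmt_lift {G : Type*} [Group G] (H : Subgroup G) (B : Finset H) (n : ℕ)
    (r : Setoid H) (hr : ∀ x, {y | r x y}.ncard = n ∧ ∀ y, r x y → x⁻¹ * y ∈ B) :
    ∃ (B' : Finset G) (r' : Setoid G), ∀ x, {y | r' x y}.ncard = n ∧
      ∀ y, r' x y → x⁻¹ * y ∈ B' := by
  classical
  let t : G → G := fun x => (QuotientGroup.mk x : G ⧸ H).out
  have ht : ∀ x, (t x)⁻¹ * x ∈ H := fun x => by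
    rw [← QuotientGroup.eq]; exact QuotientGroup.out_eq' _
  let p : G → H := fun x => ⟨(t x)⁻¹ * x, ht x⟩
  have htp : ∀ x, t x * (p x : G) = x := fun x => by simp [p]
  have htt : ∀ x (h : H), t (t x * h) = t x := by
    intro x h
    have : (QuotientGroup.mk (t x * h) : G ⧸ H) = QuotientGroup.mk x := by
      rw [QuotientGroup.mk_mul_of_mem _ h.2]; exact QuotientGroup.out_eq' _
    change (QuotientGroup.mk (t x * h) : G ⧸ H).out = _
    rw [this]
  have hpt : ∀ x (h : H), p (t x * h) = h := by
    intro x h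
    apply Subtype.ext
    change (t (t x * h))⁻¹ * (t x * h) = h
    rw [htt]; group
  let r' : Setoid G :=
    { r := fun x y => t x = t y ∧ r (p x) (p y)
      iseqv := ⟨fun x => ⟨rfl, r.refl _⟩, fun h => ⟨h.1.symm, r.symm h.2⟩,
        fun h h' => ⟨h.1.trans h'.1, r.trans h.2 h'.2⟩⟩ }
  have hdef : ∀ x y, r' x y ↔ t x = t y ∧ r (p x) (p y) := fun _ _ => Iff.rfl
  refine ⟨B.image (Subtype.val : H → G), r', fun x => ⟨?_, ?_⟩⟩
  · rw [← (hr (p x)).1]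
    have : {y | r' x y} = (fun h : H => t x * (h : G)) '' {h | r (p x) h} := by
      ext y
      simp only [Set.mem_ofPred_eq, Set.mem_image, hdef]
      constructor
      · rintro ⟨h1, h2⟩
        exact ⟨p y, h2, by rw [h1, htp]⟩
      · rintro ⟨h, hh, rfl⟩
        exact ⟨(htt x h).symm, by rw [hpt]; exact hh⟩
    rw [this, Set.ncard_image_of_injective]
    intro a b hab
    exact Subtype.ext (mul_left_cancel hab)
  · intro y hy
    obtain ⟨h1, h2⟩ := (hdef x y).1 hy
    refine Finset.mem_image.2 ⟨_, (hr (p x)).2 _ h2, ?_⟩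
    have e1 := htp x
    have e2 := htp y
    rw [← h1] at e2
    push_cast
    conv_rhs => rw [← e1, ← e2]
    group

/-- A permutation of finite support makes a prescribed `n`-set a class. -/
theorem pmt_swap {G : Type*} [Group G] (B : Finset G) (F : Finset G) (hF : 1 ∈ F)
    (r : Setoid G) (hr : ∀ x, {y | r x y}.ncard = F.card ∧ ∀ y, r x y → x⁻¹ * y ∈ B) :
    ∃ (B' : Finset G) (r' : Setoid G), (∀ x, {y | r' x y}.ncard = F.card ∧
      ∀ y, r' x y → x⁻¹ * y ∈ B') ∧ ∀ y, y ∈ F ↔ r' 1 y := by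
  classical
  have hfin : {y | r 1 y}.Finite := Set.finite_of_ncard_pos (by
    rw [(hr 1).1]; exact Finset.card_pos.2 ⟨1, hF⟩)
  set A := hfin.toFinset with hA
  have hAc : F.card = A.card := by
    rw [← (hr 1).1, Set.ncard_eq_toFinset_card _ hfin]
  -- a finitely supported permutation carrying `F` onto `A`
  obtain ⟨π, D, hπ, hD⟩ : ∃ (π : Equiv.Perm G) (D : Finset G), (∀ y, y ∈ F ↔ π y ∈ A) ∧
      ∀ y, y ∉ D → π y = y := by
    let E := F ∪ A
    let p : E → Prop := fun x => (x : G) ∈ F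
    let q : E → Prop := fun x => (x : G) ∈ A
    have e1 : Fintype.card {x // p x} = F.card := by
      rw [Fintype.card_subtype, ← Finset.card_map (Function.Embedding.subtype _)]
      congr 1
      ext y
      simp [p, E]
      tauto
    have e2 : Fintype.card {x // q x} = A.card := by
      rw [Fintype.card_subtype, ← Finset.card_map (Function.Embedding.subtype _)]
      congr 1
      ext y
      simp [q, E]
      tauto
    let e : {x // p x} ≃ {x // q x} := Fintype.equivOfCardEq (by rw [e1, e2, hAc])
    let σ : Equiv.Perm E := e.extendSubtype
    refine ⟨Equiv.Perm.ofSubtype σ, E, ?_, ?_⟩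
    · intro y
      by_cases hy : y ∈ E
      · rw [Equiv.Perm.ofSubtype_apply_of_mem σ hy]
        constructor
        · intro h
          exact e.extendSubtype_mem ⟨y, hy⟩ h
        · intro h
          by_contra h'
          exact e.extendSubtype_not_mem ⟨y, hy⟩ h' h
      · rw [Equiv.Perm.ofSubtype_apply_of_not_mem σ hy]
        simp only [E, Finset.mem_union, not_or] at hy
        exact iff_of_false hy.1 hy.2
    · intro y hy
      exact Equiv.Perm.ofSubtype_apply_of_not_mem σ hy
  let C : Finset G := insert 1 (D.image fun y => y⁻¹ * π y)
  have hC : ∀ y, y⁻¹ * π y ∈ C := by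
    intro y
    by_cases hy : y ∈ D
    · exact Finset.mem_insert_of_mem (Finset.mem_image_of_mem _ hy)
    · rw [hD y hy]; simp [C]
  refine ⟨C * B * C⁻¹, r.comap π, ⟨fun x => ⟨?_, ?_⟩, ?_⟩⟩
  · rw [← (hr (π x)).1]
    have : {y | r (π x) y} = π '' {y | (r.comap π) x y} := by
      ext y
      simp only [Set.mem_ofPred_eq, Set.mem_image]
      constructor
      · intro h; exact ⟨π.symm y, by simpa [Setoid.comap_rel] using h, by simp⟩
      · rintro ⟨z, hz, rfl⟩; exact hz
    rw [this, Set.ncard_image_of_injective _ π.injective]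
  · intro y hy
    have h2 := (hr (π x)).2 (π y) hy
    have h3 := Finset.mul_mem_mul (Finset.mul_mem_mul (hC x) h2) (Finset.inv_mem_inv (hC y))
    convert h3 using 1
    group
  · intro y
    rw [Setoid.comap_rel]
    have hA' : ∀ z, z ∈ A ↔ r 1 z := by intro z; simp [hA]
    have h1 : r 1 (π 1) := (hA' _).1 ((hπ 1).1 hF)
    rw [hπ y, hA']
    exact ⟨fun h => r.trans (r.symm h1) h, fun h => r.trans h1 h⟩

/-- Build the polytiling from a bounded equivalence relation. -/
theorem pmt_build {G : Type*} [Group G] (B : Finset G) (F : Finset G) (hF : 1 ∈ F)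
    (r : Setoid G) (hr : ∀ x, {y | r x y}.ncard = F.card ∧ ∀ y, r x y → x⁻¹ * y ∈ B)
    (hrF : ∀ y, y ∈ F ↔ r 1 y) :
    ∃ P : Polytiling G, P.Fair ∧ P.T P.fst = F := by
  classical
  let shape : G → Finset G := fun x => B.filter (fun b => r x (x * b))
  have hsh : ∀ x b, b ∈ shape x ↔ r x (x * b) := by
    intro x b
    simp only [shape, Finset.mem_filter, and_iff_right_iff_imp]
    intro h
    simpa using (hr x).2 _ h
  have hsh' : ∀ x y, y ∈ x • (shape x : Set G) ↔ r x y := by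
    intro x y
    rw [Set.mem_smul_set_iff_inv_smul_mem, Finset.mem_coe, hsh]
    simp
  have hshc : ∀ x, (shape x).card = F.card := by
    intro x
    rw [← (hr x).1, ← Set.ncard_coe_finset, ← Set.ncard_smul_set x]
    congr 1
    ext y
    exact hsh' x y
  have hsh1 : shape 1 = F := by
    ext b; rw [hsh, hrF]; simp
  let rep : G → G := fun x => if r x 1 then 1 else (Quotient.mk r x).out
  have hrep : ∀ x, r x (rep x) := by
    intro x
    by_cases h : r x 1
    · simpa [rep, h] using h
    · simp only [rep, h, if_false]
      exact r.symm (Quotient.mk_out x)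
  have hrep2 : ∀ x y, r x y → rep x = rep y := by
    intro x y h
    have h1 : r x 1 ↔ r y 1 := ⟨fun h' => r.trans (r.symm h) h', fun h' => r.trans h h'⟩
    have h2 : Quotient.mk r x = Quotient.mk r y := Quotient.sound h
    simp only [rep, h1, h2]
  have hrep1 : rep 1 = 1 := by simp [rep]
  let 𝒯 : Finset (Finset G) := B.powerset.filter (fun T => ∃ x, rep x = x ∧ shape x = T)
  have h𝒯 : ∀ x, rep x = x → shape x ∈ 𝒯 := by
    intro x hx
    refine Finset.mem_filter.2 ⟨Finset.mem_powerset.2 (Finset.filter_subset _ _), x, hx, rfl⟩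
  have hF𝒯 : F ∈ 𝒯 := hsh1 ▸ h𝒯 1 hrep1
  have hpos : 0 < 𝒯.card := Finset.card_pos.2 ⟨F, hF𝒯⟩
  let e : 𝒯 ≃ Fin 𝒯.card := 𝒯.equivFin
  let e' : Fin 𝒯.card ≃ 𝒯 := (Equiv.swap ⟨0, hpos⟩ (e ⟨F, hF𝒯⟩)).trans e.symm
  have he' : e' ⟨0, hpos⟩ = ⟨F, hF𝒯⟩ := by simp [e']
  have hT : ∀ i, ∃ x, rep x = x ∧ shape x = (e' i : Finset G) := fun i =>
    (Finset.mem_filter.1 (e' i).2).2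
  let P : Polytiling G :=
    { k := 𝒯.card
      k_pos := hpos
      T := fun i => (e' i : Finset G)
      Δ := fun i => {x | rep x = x ∧ shape x = (e' i : Finset G)}
      one_mem := by
        intro i
        obtain ⟨x, _, hx⟩ := hT i
        rw [← hx, hsh, mul_one]
      delta_nonempty := fun i => hT i
      covers := by
        intro g
        have h1 : rep (rep g) = rep g := (hrep2 _ _ (hrep g)).symm
        refine ⟨e'.symm ⟨_, h𝒯 _ h1⟩, rep g, ⟨h1, by simp⟩, ?_⟩
        simp only [Equiv.apply_symm_apply]
        rw [hsh']
        exact r.symm (hrep g)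
      disj := by
        rintro i j x ⟨hx, hxi⟩ y ⟨hy, hyj⟩ hne
        rw [← hxi, ← hyj, Set.disjoint_left]
        intro z hz hz'
        rw [hsh'] at hz hz'
        have hxy : x = y := by
          rw [← hx, ← hy]; exact hrep2 _ _ (r.trans hz (r.symm hz'))
        subst hxy
        apply hne
        rw [hxi] at hyj
        rw [e'.injective (Subtype.ext hyj)] }
  refine ⟨P, ?_, ?_⟩
  · intro i j
    obtain ⟨x, _, hx⟩ := hT i
    obtain ⟨y, _, hy⟩ := hT j
    change (e' i : Finset G).card = (e' j : Finset G).card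
    rw [← hx, ← hy, hshc, hshc]
  · change ((e' ⟨0, hpos⟩ : 𝒯) : Finset G) = F
    rw [he']

theorem pmt_gen {G : Type*} [Group G] [DecidableEq G] (F : Finset G) :
    ∃ S : Finset (Subgroup.closure (F : Set G)), (1 : Subgroup.closure (F : Set G)) ∈ S ∧
      ∀ x, ∃ k : ℕ, x ∈ S ^ k := by
  classical
  set H := Subgroup.closure (F : Set G)
  let S0 : Finset G := insert 1 (F ∪ F⁻¹)
  have hsub : ∀ y ∈ S0, y ∈ H := by
    intro y hy
    simp only [S0, Finset.mem_insert, Finset.mem_union, Finset.mem_inv'] at hy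
    rcases hy with rfl | h | h
    · exact H.one_mem
    · exact Subgroup.subset_closure h
    · exact H.inv_mem_iff.1 (Subgroup.subset_closure h)
  let S : Finset H := S0.subtype (· ∈ H)
  have hS : ∀ x : H, x ∈ S ↔ (x : G) ∈ S0 := fun x => by simp [S]
  refine ⟨S, by rw [hS]; simp [S0], ?_⟩
  rintro ⟨x, hx⟩
  have key : ∀ x ∈ Submonoid.closure ((F : Set G) ∪ (F : Set G)⁻¹),
      ∃ (h : x ∈ H) (k : ℕ), (⟨x, h⟩ : H) ∈ S ^ k := by
    intro x hx
    induction hx using Submonoid.closure_induction with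
    | mem x hx =>
      have h0 : x ∈ S0 := by
        simp only [S0, Finset.mem_insert, Finset.mem_union, Finset.mem_inv']
        exact Or.inr hx
      exact ⟨hsub x h0, 1, by rw [pow_one, hS]; exact h0⟩
    | one => exact ⟨H.one_mem, 0, by simp⟩
    | mul x y _ _ hx hy =>
      obtain ⟨h, k, hk⟩ := hx
      obtain ⟨h', k', hk'⟩ := hy
      refine ⟨H.mul_mem h h', k + k', ?_⟩
      rw [pow_add]
      exact Finset.mul_mem_mul hk hk'
  have hxm : x ∈ (Subgroup.closure (F : Set G)).toSubmonoid := hx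
  rw [Subgroup.closure_toSubmonoid] at hxm
  exact (key x hxm).2

/-- Every countable group is poly-MT: every finite subset is contained in the first tile
of some fair polytile. -/
theorem countable_group_is_poly_MT (G : Type*) [Group G] [Countable G] (F : Finset G) :
    ∃ P : Polytiling G, P.Fair ∧ (F : Set G) ⊆ ((P.T P.fst : Finset G) : Set G) := by
  classical
  set F' := insert 1 F with hF'
  have h1 : (1 : G) ∈ F' := Finset.mem_insert_self _ _
  have hFF : F ⊆ F' := Finset.subset_insert _ _
  rcases finite_or_infinite (Subgroup.closure (F' : Set G)) with hfin | hinf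
  · set H := Subgroup.closure (F' : Set G)
    have hHfin : (H : Set G).Finite := Set.toFinite _
    have hrel : ∀ x y, QuotientGroup.leftRel H x y ↔ x⁻¹ * y ∈ H := fun x y =>
      QuotientGroup.leftRel_apply
    obtain ⟨P, hP, hPF⟩ := pmt_build hHfin.toFinset hHfin.toFinset (by simp [H.one_mem])
      (QuotientGroup.leftRel H) (by
        intro x
        constructor
        · rw [← Set.ncard_eq_toFinset_card _ hHfin, ← Set.ncard_smul_set x (H : Set G)]
          congr 1
          ext y
          rw [Set.mem_ofPred_eq, hrel, Set.mem_smul_set_iff_inv_smul_mem]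
          rfl
        · intro y hy
          rw [hrel] at hy
          simpa using hy) (by
        intro y
        rw [hrel]
        simp)
    refine ⟨P, hP, ?_⟩
    rw [hPF]
    intro x hx
    simp only [Set.Finite.coe_toFinset]
    exact Subgroup.subset_closure (hFF hx)
  · obtain ⟨S, hS1, hS⟩ := pmt_gen F'
    obtain ⟨r, hr⟩ := pmt_compact _ F'.card
      (pmt_local S hS1 hS F'.card (Finset.card_pos.2 ⟨1, h1⟩))
    obtain ⟨B', r', hr'⟩ := pmt_lift _ _ _ r hr
    obtain ⟨B'', r'', hr'', hc⟩ := pmt_swap B' F' h1 r' hr'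
    obtain ⟨P, hP, hPF⟩ := pmt_build B'' F' h1 r'' hr'' hc
    refine ⟨P, hP, ?_⟩
    rw [hPF]
    exact_mod_cast hFF
end

section
/- Let G be a countable group that is not locally finite. Then for every integer n ≥ 1 there is a fair polytile (T₁,…,T_k) of G with |T₁| = n. Moreover, for every finite subset F ⊆ G there exists N such that for every n ≥ N there is a fair polytile (T₁,…,T_k) of G with F ⊆ T₁ and |T₁| = n. -/
open scoped Pointwise

section Aux
open Classical

theorem polytiling_of_partition {G : Type*} [Group G] (P : G → Finset G) (K : Set G)
    (hK : K.Finite) (n : ℕ) (x0 : G) (F : Finset G)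
    (hmem : ∀ x, x ∈ P x) (hcard : ∀ x, (P x).card = n)
    (heq : ∀ x, ∀ y ∈ P x, P y = P x) (hKm : ∀ x, ∀ y ∈ P x, x⁻¹ * y ∈ K)
    (hF : ∀ f ∈ F, x0 * f ∈ P x0) :
    ∃ Q : Polytiling G, Q.Fair ∧ (F : Set G) ⊆ ((Q.T Q.fst : Finset G) : Set G) ∧
        (Q.T Q.fst).card = n := by
  obtain ⟨c, hcm, hc, hc0⟩ : ∃ c : G → G, (∀ x, c x ∈ P x) ∧ (∀ x y, P x = P y → c x = c y) ∧
      c x0 = x0 := by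
    refine ⟨fun x => if P x = P x0 then x0 else
      if h : (P x).Nonempty then h.choose else x0, ?_, ?_, ?_⟩
    · intro x
      have h : (P x).Nonempty := ⟨x, hmem x⟩
      by_cases h1 : P x = P x0
      · simp [h1, hmem]
      · simp only [h1, h, if_false, dif_pos]
        exact h.choose_spec
    · intro x y h
      simp only [h]
    · simp
  let T : G → Finset G := fun x => (P x).image (fun y => (c x)⁻¹ * y)
  have hT1 : ∀ x, 1 ∈ T x := fun x => Finset.mem_image.2 ⟨c x, hcm x, by simp⟩
  have hTcard : ∀ x, (T x).card = n := fun x => by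
    rw [Finset.card_image_of_injective _ (mul_right_injective _), hcard]
  have hTP : ∀ x, c x • (T x : Set G) = P x := by
    intro x
    ext z
    simp only [T, Finset.coe_image, Set.mem_smul_set, Set.mem_image, Finset.mem_coe, smul_eq_mul]
    constructor
    · rintro ⟨_, ⟨y, hy, rfl⟩, rfl⟩
      simpa using hy
    · intro hz
      exact ⟨_, ⟨z, hz, rfl⟩, by simp⟩
  have hTeq : ∀ x y, P x = P y → T x = T y := fun x y h => by
    simp only [T, h, hc x y h]
  have hfin : (Set.range T).Finite := by
    refine (hK.toFinset.powerset.finite_toSet).subset ?_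
    rintro _ ⟨x, rfl⟩
    simp only [Finset.coe_powerset, Set.mem_preimage, Set.mem_powerset_iff]
    intro z hz
    obtain ⟨y, hy, rfl⟩ := Finset.mem_image.1 (Finset.mem_coe.1 hz)
    simp only [Set.Finite.coe_toFinset]
    apply hKm
    rw [heq x _ (hcm x)]; exact hy
  have : Fintype (Set.range T) := hfin.fintype
  have hkpos : 0 < Fintype.card (Set.range T) := Fintype.card_pos_iff.2 ⟨⟨T x0, x0, rfl⟩⟩
  obtain ⟨e, he⟩ : ∃ e : Fin (Fintype.card (Set.range T)) ≃ Set.range T,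
      e ⟨0, hkpos⟩ = ⟨T x0, x0, rfl⟩ := by
    let e0 := (Fintype.equivFin (Set.range T)).symm
    exact ⟨e0.trans (Equiv.swap (e0 ⟨0, hkpos⟩) ⟨T x0, x0, rfl⟩), by simp⟩
  let Q : Polytiling G :=
    { k := Fintype.card (Set.range T)
      k_pos := hkpos
      T := fun i => (e i).1
      Δ := fun i => {g | ∃ x, T x = (e i).1 ∧ c x = g}
      one_mem := by
        intro i
        obtain ⟨x, hx⟩ := (e i).2
        rw [← hx]; exact hT1 x
      delta_nonempty := by
        intro i
        obtain ⟨x, hx⟩ := (e i).2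
        exact ⟨c x, x, hx, rfl⟩
      covers := by
        intro g
        refine ⟨e.symm ⟨T g, g, rfl⟩, c g, ⟨g, by simp, rfl⟩, ?_⟩
        simp only [Equiv.apply_symm_apply]
        rw [hTP]; exact hmem g
      disj := by
        rintro i j _ ⟨x, hx, rfl⟩ _ ⟨y, hy, rfl⟩ hne
        rw [← hx, ← hy, hTP, hTP, Set.disjoint_left]
        intro z hz hz'
        have h : P x = P y := (heq x z hz).symm.trans (heq y z hz')
        apply hne
        have hij : i = j := e.injective (Subtype.ext (by rw [← hx, ← hy, hTeq x y h]))
        rw [hij, hc x y h] }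
  have hQT : Q.T Q.fst = T x0 := by
    change (e ⟨0, hkpos⟩).1 = _
    rw [he]
  have hQc : ∀ i, (Q.T i).card = n := by
    intro i
    change ((e i).1).card = n
    obtain ⟨x, hx⟩ := (e i).2
    rw [← hx, hTcard]
  refine ⟨Q, fun i j => by rw [hQc, hQc], ?_, hQc _⟩
  rw [hQT]
  intro f hf
  exact Finset.mem_coe.2 (Finset.mem_image.2 ⟨x0 * f, hF f hf, by simp [hc0]⟩)

/-- finite sets built from `{1}` by adding neighbours, avoiding `E` -/
inductive Built {H : Type*} [Group H] (S : Set H) (E : Finset H) : Finset H → Prop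
  | base : Built S E {1}
  | step (U : Finset H) (v p : H) : Built S E U → v ∉ U → v ∉ E → p ∈ U → p⁻¹ * v ∈ S →
      Built S E (insert v U)

theorem built_bags {H : Type*} [Group H] (S : Set H) (hS1 : 1 ∈ S) (E : Finset H) (n : ℕ)
    (U : Finset H) (hU : Built S E U) :
    ∀ b : H → List H, (∀ p, (b p).length < n) →
      (∀ p j (hj : j < (b p).length), p⁻¹ * (b p)[j] ∈ S ^ (j + 1)) →
      ∃ (r : List H) (L : List (List H)), r.length < n ∧ (∀ y ∈ r, y ∈ S ^ n) ∧
        (∀ l ∈ L, l.length = n ∧ ∃ q : H, ∀ y ∈ l, q⁻¹ * y ∈ S ^ n) ∧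
        (∑ x ∈ U, (({x} : Multiset H) + (b x : Multiset H))) =
          {1} + (r : Multiset H) + (L.flatten : Multiset H) := by
  have mono : ∀ {i j : ℕ} {x : H}, i ≤ j → x ∈ S ^ i → x ∈ S ^ j := fun h hx =>
    Set.pow_subset_pow_right hS1 h hx
  induction hU with
  | base =>
    intro b hb hd
    refine ⟨b 1, [], hb 1, ?_, by simp, by simp⟩
    intro y hy
    obtain ⟨j, hj, rfl⟩ := List.mem_iff_getElem.1 hy
    have := hd 1 j hj
    rw [inv_one, one_mul] at this
    exact mono (by have := hb 1; omega) this
  | step U v p hU hvU hvE hpU hpv ih =>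
    intro b hb hd
    have hm : ∀ j (hj : j < (v :: b v).length), p⁻¹ * (v :: b v)[j] ∈ S ^ (j + 1) := by
      intro j hj
      have e : p⁻¹ * (v :: b v)[j] = (p⁻¹ * v) * (v⁻¹ * (v :: b v)[j]) := by group
      rw [e, pow_succ']
      refine Set.mul_mem_mul hpv ?_
      cases j with
      | zero => simp
      | succ j => simpa using hd v j (by simpa using hj)
    have hbl := hb v
    set w := b p ++ (v :: b v) with hc
    have hcd : ∀ j (hj : j < w.length), p⁻¹ * w[j] ∈ S ^ (j + 1) := by
      intro j hj
      simp only [hc, List.getElem_append]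
      split_ifs with h
      · exact hd p j h
      · exact mono (by omega) (hm (j - (b p).length) (by simp [hc] at hj ⊢; omega))
    have hcn : ∀ y ∈ w, p⁻¹ * y ∈ S ^ n := by
      intro y hy
      rcases List.mem_append.1 hy with h | h
      · obtain ⟨j, hj, rfl⟩ := List.mem_iff_getElem.1 h
        exact mono (by have := hb p; omega) (hd p j hj)
      · obtain ⟨j, hj, rfl⟩ := List.mem_iff_getElem.1 h
        exact mono (by simp at hj; omega) (hm j hj)
    obtain ⟨k, hk, hL⟩ : ∃ k, (w.take k).length < n ∧
        ((w.drop k) = [] ∨ (w.drop k).length = n) := by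
      by_cases h : w.length < n
      · exact ⟨w.length, by simpa using h, Or.inl (by simp)⟩
      · have h2 : w.length < 2 * n ∨ w.length = 2 * n := by
          have := hb p
          simp only [hc, List.length_append, List.length_cons]; omega
        refine ⟨w.length - n, ?_, Or.inr ?_⟩
        · have := hb p
          simp only [List.length_take]
          have : w.length = (b p).length + (b v).length + 1 := by simp [hc]; omega
          omega
        · simp; omega
    obtain ⟨r, L, hr, hr', hL', hsum⟩ := ih (Function.update b p (w.take k))
      (by
        intro q
        by_cases hq : q = p
        · subst hq; simpa using hk
        · simpa [hq] using hb q)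
      (by
        intro q j hj
        by_cases hq : q = p
        · subst hq
          simp only [Function.update_self] at hj ⊢
          rw [List.getElem_take]
          exact hcd j _
        · simp only [Function.update_of_ne hq] at hj ⊢
          exact hd q j hj)
    have key : (∑ x ∈ insert v U, (({x} : Multiset H) + (b x : Multiset H))) =
        (∑ x ∈ U, (({x} : Multiset H) + (Function.update b p (w.take k) x : Multiset H)))
          + (w.drop k : Multiset H) := by
      rw [Finset.sum_insert hvU, ← Finset.add_sum_erase U _ hpU, ← Finset.add_sum_erase U _ hpU,
        Function.update_self]
      have h1 : ∑ x ∈ U.erase p, (({x} : Multiset H) +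
          (Function.update b p (w.take k) x : Multiset H)) =
          ∑ x ∈ U.erase p, (({x} : Multiset H) + (b x : Multiset H)) :=
        Finset.sum_congr rfl fun x hx => by
          rw [Function.update_of_ne (Finset.ne_of_mem_erase hx)]
      rw [h1]
      have h2 : ((w.take k : List H) : Multiset H) + (w.drop k : Multiset H)
          = (b p : Multiset H) + ({v} + (b v : Multiset H)) := by
        rw [Multiset.coe_add, List.take_append_drop, hc, ← Multiset.coe_add, ← Multiset.cons_coe,
          Multiset.singleton_add]
      calc _ = {p} + ((b p : Multiset H) + ({v} + (b v : Multiset H))) +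
            ∑ x ∈ U.erase p, (({x} : Multiset H) + (b x : Multiset H)) := by abel
        _ = _ := by rw [← h2]; abel
    rw [key, hsum]
    rcases hL with h | h
    · exact ⟨r, L, hr, hr', hL', by rw [h]; simp⟩
    · refine ⟨r, w.drop k :: L, hr, hr', ?_, ?_⟩
      · intro l hl
        rcases List.mem_cons.1 hl with rfl | hl
        · exact ⟨h, p, fun y hy => hcn y (List.mem_of_mem_drop hy)⟩
        · exact hL' l hl
      · rw [List.flatten_cons, ← Multiset.coe_add]; abel

theorem built_one {H : Type*} [Group H] {S : Set H} {E U : Finset H} (hU : Built S E U) :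
    1 ∈ U := by
  induction hU with
  | base => simp
  | step => simp [*]

theorem built_inter {H : Type*} [Group H] {S : Set H} {E U : Finset H} (hU : Built S E U) :
    ∀ x ∈ U, x ∈ E → x = 1 := by
  induction hU with
  | base => simp
  | step U v p hU hvU hvE hpU hpv ih =>
    intro x hx hE
    rcases Finset.mem_insert.1 hx with rfl | hx
    · exact absurd hE hvE
    · exact ih x hx hE

theorem built_partition {H : Type*} [Group H] (S : Set H) (hS1 : 1 ∈ S) (E : Finset H)
    (h1E : 1 ∈ E) (hES : (E : Set H) ⊆ S) (n : ℕ) (hn : E.card ≤ n)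
    (U : Finset H) (hU : Built S E U) (hdvd : n ∣ (U ∪ E).card) :
    ∃ P : H → Finset H, E ⊆ P 1 ∧ ∀ x ∈ U ∪ E, x ∈ P x ∧ (P x).card = n ∧
      (∀ y ∈ P x, P y = P x) ∧ ∀ y ∈ P x, x⁻¹ * y ∈ (S ^ n)⁻¹ * S ^ n := by
  have hE0 : 0 < E.card := Finset.card_pos.2 ⟨1, h1E⟩
  obtain ⟨r, L, hr, hr', hL, hsum⟩ := built_bags S hS1 E n U hU (fun _ => [])
    (fun p => by simp; omega) (by simp)
  have hUval : U.val = {1} + (r : Multiset H) + (L.flatten : Multiset H) := by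
    rw [← hsum]; simp [Finset.sum_multiset_singleton]
  let M : List (List H) := (E.toList ++ r) :: L
  have hM : (M.flatten : Multiset H) = (U ∪ E).val := by
    have : (U ∪ E).val = (U.erase 1).val + E.val := by
      have hd : Disjoint (U.erase 1) E := by
        rw [Finset.disjoint_left]
        intro x hx hE
        exact (Finset.mem_erase.1 hx).1 (built_inter hU x (Finset.mem_erase.1 hx).2 hE)
      have h2 : U ∪ E = (U.erase 1).disjUnion E hd := by
        ext x
        simp only [Finset.disjUnion_eq_union, Finset.mem_union, Finset.mem_erase]
        by_cases h : x = 1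
        · simp [h, h1E]
        · simp [h]
      rw [h2]; rfl
    rw [this, Finset.erase_val, hUval, add_assoc, Multiset.singleton_add, Multiset.erase_cons_head]
    simp only [M, List.flatten_cons]
    rw [← Multiset.coe_add, ← Multiset.coe_add, Finset.coe_toList]
    abel
  have hnd : M.flatten.Nodup := by
    rw [← Multiset.coe_nodup, hM]; exact (U ∪ E).nodup
  have hlenL : ∀ L : List (List H), (∀ l ∈ L, l.length = n) → n ∣ L.flatten.length := by
    intro L hL
    induction L with
    | nil => simp
    | cons a L ih =>
      rw [List.flatten_cons, List.length_append, hL a (by simp)]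
      exact Dvd.dvd.add (dvd_refl _) (ih fun l hl => hL l (by simp [hl]))
  have hroot : (E.toList ++ r).length = n := by
    have h1 : M.flatten.length = (U ∪ E).card := by
      rw [← Multiset.coe_card, hM]; rfl
    have h2 := hlenL L (fun l hl => (hL l hl).1)
    rw [← h1] at hdvd
    simp only [M, List.flatten_cons] at hdvd
    rw [List.length_append] at hdvd
    have h3 := (Nat.dvd_add_left h2).1 hdvd
    obtain ⟨t, ht⟩ := h3
    have h4 : (E.toList ++ r).length = E.card + r.length := by simp
    have : t = 1 := by
      have : t < 2 := by
        by_contra h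
        have : n * 2 ≤ n * t := Nat.mul_le_mul_left _ (by omega)
        omega
      have : t ≠ 0 := by rintro rfl; omega
      omega
    rw [ht, this, mul_one]
  have hn1 : n ≠ 0 := by omega
  have hMl : ∀ l ∈ M, l.length = n ∧ ∃ q : H, ∀ y ∈ l, q⁻¹ * y ∈ S ^ n := by
    intro l hl
    rcases List.mem_cons.1 hl with rfl | hl
    · refine ⟨hroot, 1, fun y hy => ?_⟩
      rw [inv_one, one_mul]
      rcases List.mem_append.1 hy with h | h
      · have := hES (Finset.mem_toList.1 h)
        rw [← pow_one S] at this
        exact Set.pow_subset_pow_right hS1 (by omega) this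
      · exact hr' y h
    · exact hL l hl
  rw [List.nodup_flatten] at hnd
  obtain ⟨hnd1, hnd2⟩ := hnd
  have huniq : ∀ l ∈ M, ∀ l' ∈ M, ∀ x ∈ l, x ∈ l' → l = l' := by
    intro l hl l' hl' x hx hx'
    by_contra hne
    have : Std.Symm (List.Disjoint (α := H)) := ⟨fun _ _ h => List.Disjoint.symm h⟩
    exact hnd2.forall hl hl' hne hx hx'
  let P : H → Finset H := fun x => if h : ∃ l ∈ M, x ∈ l then h.choose.toFinset else ∅
  have hP : ∀ l ∈ M, ∀ x ∈ l, P x = l.toFinset := by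
    intro l hl x hx
    have h : ∃ l ∈ M, x ∈ l := ⟨l, hl, hx⟩
    simp only [P, dif_pos h]
    rw [huniq _ h.choose_spec.1 l hl x h.choose_spec.2 hx]
  refine ⟨P, ?_, ?_⟩
  · rw [hP (E.toList ++ r) (by simp [M]) 1 (by simp [h1E])]
    intro x hx
    simp [hx]
  · intro x hx
    obtain ⟨l, hl, hxl⟩ : ∃ l ∈ M, x ∈ l := by
      rw [← List.mem_flatten, ← Multiset.mem_coe, hM]; exact hx
    obtain ⟨hlen, q, hq⟩ := hMl l hl
    rw [hP l hl x hxl]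
    refine ⟨by simpa using hxl, ?_, ?_, ?_⟩
    · rw [List.toFinset_card_of_nodup (hnd1 l hl), hlen]
    · intro y hy
      exact hP l hl y (by simpa using hy)
    · intro y hy
      refine Set.mem_mul.2 ⟨x⁻¹ * q, ?_, q⁻¹ * y, hq y (by simpa using hy), by group⟩
      rw [Set.mem_inv]
      simpa using hq x hxl

theorem built_step {H : Type*} [Group H] (F0 : Finset H) (E : Finset H) (h1E : 1 ∈ E)
    (S : Set H) (hS : ∀ e ∈ E, ∀ f ∈ F0, e * f ∈ S ∧ e * f⁻¹ ∈ S)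
    (U : Finset H) (hU : Built S E U) (g f : H) (hg : g ∈ U ∪ E) (hf : f ∈ F0 ∨ f⁻¹ ∈ F0)
    (h : g * f ∉ U ∪ E) : Built S E (insert (g * f) U) := by
  have hS' : ∀ e ∈ E, e * f ∈ S := by
    intro e he
    rcases hf with hf | hf
    · exact (hS e he f hf).1
    · simpa using (hS e he _ hf).2
  simp only [Finset.mem_union, not_or] at h hg
  rcases hg with hg | hg
  · refine Built.step U (g * f) g hU h.1 h.2 hg ?_
    simpa using hS' 1 h1E
  · refine Built.step U (g * f) 1 hU h.1 h.2 (built_one hU) ?_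
    simpa using hS' g hg

theorem exists_partition {H : Type*} [Group H] [Infinite H] (F0 : Finset H)
    (hF0 : Subgroup.closure (F0 : Set H) = ⊤) (E : Finset H) (h1E : 1 ∈ E) (n : ℕ)
    (hn : E.card ≤ n) [Countable H] :
    ∃ (P : H → Finset H) (K : Set H), K.Finite ∧ E ⊆ P 1 ∧ ∀ x, x ∈ P x ∧ (P x).card = n ∧
      (∀ y ∈ P x, P y = P x) ∧ ∀ y ∈ P x, x⁻¹ * y ∈ K := by
  let Sf : Finset H := E * (insert 1 (F0 ∪ F0⁻¹))
  let S : Set H := (Sf : Set H)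
  have hS : ∀ e ∈ E, ∀ f ∈ F0, e * f ∈ S ∧ e * f⁻¹ ∈ S := by
    intro e he f hf
    constructor
    · exact Finset.mem_coe.2 (Finset.mul_mem_mul he (by simp [hf]))
    · exact Finset.mem_coe.2 (Finset.mul_mem_mul he (by simp [hf]))
  have hES : (E : Set H) ⊆ S := by
    intro e he
    refine Finset.mem_coe.2 ?_
    rw [← mul_one e]
    exact Finset.mul_mem_mul he (by simp)
  have hS1 : 1 ∈ S := hES h1E
  have hE0 : 0 < E.card := Finset.card_pos.2 ⟨1, h1E⟩
  -- claim A
  have hA : ∀ g : H, ∀ U, Built S E U → ∃ U', Built S E U' ∧ U ⊆ U' ∧ g ∈ U' ∪ E := by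
    intro g
    have hg : g ∈ Subgroup.closure (F0 : Set H) := by rw [hF0]; trivial
    induction hg using Subgroup.closure_induction_right with
    | one => exact fun U hU => ⟨U, hU, subset_rfl, by simp [h1E]⟩
    | mul_right x hx f hf ih =>
      intro U hU
      obtain ⟨U', hU', hs, hxU⟩ := ih U hU
      by_cases h : x * f ∈ U' ∪ E
      · exact ⟨U', hU', hs, h⟩
      · exact ⟨_, built_step F0 E h1E S hS U' hU' x f hxU (Or.inl hf) h,
          hs.trans (Finset.subset_insert _ _), by simp⟩
    | mul_inv_cancel x hx f hf ih =>
      intro U hU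
      obtain ⟨U', hU', hs, hxU⟩ := ih U hU
      by_cases h : x * f⁻¹ ∈ U' ∪ E
      · exact ⟨U', hU', hs, h⟩
      · exact ⟨_, built_step F0 E h1E S hS U' hU' x f⁻¹ hxU (Or.inr (by simpa using hf)) h,
          hs.trans (Finset.subset_insert _ _), by simp⟩
  have hB : ∀ U, Built S E U → ∃ U', Built S E U' ∧ U ⊆ U' ∧
      (U' ∪ E).card = (U ∪ E).card + 1 := by
    intro U hU
    by_contra hcon
    have hstep : ∀ g ∈ U ∪ E, ∀ f, (f ∈ F0 ∨ f⁻¹ ∈ F0) → g * f ∈ U ∪ E := by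
      intro g hg f hf
      by_contra h
      refine hcon ⟨_, built_step F0 E h1E S hS U hU g f hg hf h, Finset.subset_insert _ _, ?_⟩
      rw [Finset.insert_union, Finset.card_insert_of_notMem h]
    have hall : ∀ g, g ∈ U ∪ E := by
      intro g
      have hg : g ∈ Subgroup.closure (F0 : Set H) := by rw [hF0]; trivial
      induction hg using Subgroup.closure_induction_right with
      | one => simp [h1E]
      | mul_right x hx f hf ih => exact hstep x ih f (Or.inl hf)
      | mul_inv_cancel x hx f hf ih => exact hstep x ih f⁻¹ (Or.inr (by simpa using hf))
    obtain ⟨g, hg⟩ := Infinite.exists_notMem_finset (U ∪ E)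
    exact hg (hall g)
  have hB' : ∀ k U, Built S E U → ∃ U', Built S E U' ∧ U ⊆ U' ∧
      (U' ∪ E).card = (U ∪ E).card + k := by
    intro k
    induction k with
    | zero => exact fun U hU => ⟨U, hU, subset_rfl, rfl⟩
    | succ k ih =>
      intro U hU
      obtain ⟨U', h1, h2, h3⟩ := ih U hU
      obtain ⟨U'', h1', h2', h3'⟩ := hB U' h1
      exact ⟨U'', h1', h2.trans h2', by omega⟩
  have hC : ∀ M : Finset H, ∃ U, Built S E U ∧ M ⊆ U ∪ E := by
    intro M
    induction M using Finset.induction_on with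
    | empty => exact ⟨{1}, Built.base, by simp⟩
    | insert g M _ ih =>
      obtain ⟨U, hU, hM⟩ := ih
      obtain ⟨U', hU', hs, hg⟩ := hA g U hU
      refine ⟨U', hU', Finset.insert_subset hg (hM.trans (Finset.union_subset_union_left hs))⟩
  have hD : ∀ M : Finset H, ∃ P : H → Finset H, E ⊆ P 1 ∧ ∀ x ∈ M, x ∈ P x ∧ (P x).card = n ∧
      (∀ y ∈ P x, P y = P x) ∧ ∀ y ∈ P x, x⁻¹ * y ∈ (S ^ n)⁻¹ * S ^ n := by
    intro M
    obtain ⟨U, hU, hM⟩ := hC M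
    obtain ⟨U', hU', hs, hcard⟩ := hB' ((U ∪ E).card * (n - 1)) U hU
    obtain ⟨P, h1, h2⟩ := built_partition S hS1 E h1E hES n hn U' hU' (by
      rw [hcard]
      refine ⟨(U ∪ E).card, ?_⟩
      obtain ⟨m, rfl⟩ : ∃ m, n = m + 1 := ⟨n - 1, by omega⟩
      simp only [Nat.add_sub_cancel]; ring)
    exact ⟨P, h1, fun x hx => h2 x (Finset.union_subset_union_left hs (hM hx))⟩
  choose p hp1 hp using hD
  set K : Set H := (S ^ n)⁻¹ * S ^ n with hK
  have hKfin : K.Finite := by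
    have : (S ^ n).Finite := by
      have : S ^ n = ((Sf ^ n : Finset H) : Set H) := by simp [S]
      rw [this]; exact Finset.finite_toSet _
    exact Set.Finite.mul this.inv this
  let 𝓕 : Ultrafilter (Finset H) := Ultrafilter.of Filter.atTop
  have h𝓕 : (𝓕 : Filter (Finset H)) ≤ Filter.atTop := Ultrafilter.of_le _
  have hev : ∀ x : H, ∀ᶠ M in (𝓕 : Filter (Finset H)), x ∈ M := by
    intro x
    apply h𝓕
    filter_upwards [Filter.eventually_ge_atTop {x}] with M hM
    exact hM (by simp)
  have hlim : ∀ x : H, ∃ A : Finset H, ∀ᶠ M in (𝓕 : Filter (Finset H)), p M x = A := by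
    intro x
    have hf : (((hKfin.toFinset.image (fun y => x * y)).powerset : Finset (Finset H)) :
      Set (Finset H)).Finite := Finset.finite_toSet _
    have h1 : ∀ᶠ M in (𝓕 : Filter (Finset H)), ∃ A ∈
        (((hKfin.toFinset.image (fun y => x * y)).powerset : Finset (Finset H)) :
          Set (Finset H)), p M x = A := by
      filter_upwards [hev x] with M hM
      refine ⟨p M x, ?_, rfl⟩
      rw [Finset.mem_coe, Finset.mem_powerset]
      intro y hy
      exact Finset.mem_image.2 ⟨x⁻¹ * y, by simpa using (hp M x hM).2.2.2 y hy, by group⟩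
    obtain ⟨A, _, hA⟩ := (Ultrafilter.eventually_exists_mem_iff hf).1 h1
    exact ⟨A, hA⟩
  choose P hP using hlim
  refine ⟨P, K, hKfin, ?_, ?_⟩
  · obtain ⟨M, hM⟩ := (hP 1).exists
    rw [← hM]; exact hp1 M
  · intro x
    have h2 : ∀ᶠ M in (𝓕 : Filter (Finset H)), ∀ y ∈ P x, p M y = P y :=
      (Finset.eventually_all (P x)).2 fun y _ => hP y
    obtain ⟨M, hMx, hM, hMy⟩ := ((hev x).and ((hP x).and h2)).exists
    obtain ⟨a1, a2, a3, a4⟩ := hp M x hMx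
    rw [hM] at a1 a2 a3 a4
    exact ⟨a1, a2, fun y hy => by rw [← hMy y hy, a3 y hy], a4⟩

theorem main_aux {G : Type*} [Group G] [Countable G]
    (hnlf : ¬ ∀ F : Finset G, ((Subgroup.closure (F : Set G) : Subgroup G) : Set G).Finite)
    (F : Finset G) (n : ℕ) (hn : (insert 1 F).card ≤ n) :
    ∃ Q : Polytiling G, Q.Fair ∧ (F : Set G) ⊆ ((Q.T Q.fst : Finset G) : Set G) ∧
        (Q.T Q.fst).card = n := by
  push Not at hnlf
  obtain ⟨F1, hF1⟩ := hnlf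
  let F2 : Finset G := F1 ∪ F
  let H : Subgroup G := Subgroup.closure (F2 : Set G)
  have hinf : Infinite H := by
    rw [← SetLike.coe_sort_coe, Set.infinite_coe_iff]
    refine Set.Infinite.mono ?_ hF1
    exact Subgroup.closure_mono (by simp [F2])
  let F0 : Finset H := F2.subtype (· ∈ H)
  have hF0 : Subgroup.closure (F0 : Set H) = ⊤ := by
    have := Subgroup.closure_closure_coe_preimage (k := (F2 : Set G))
    convert this using 2
    ext x
    simp [F0, H]
  let E : Finset H := (insert 1 F).subtype (· ∈ H)
  have hEmem : ∀ f ∈ F, f ∈ H := fun f hf => Subgroup.subset_closure (by simp [F2, hf])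
  have h1E : (1 : H) ∈ E := by simp [E]
  have hEcard : E.card ≤ n := by
    refine le_trans ?_ hn
    rw [Finset.card_subtype]
    exact Finset.card_filter_le _ _
  obtain ⟨P, K, hK, hEP, hP⟩ := exists_partition F0 hF0 E h1E n hEcard
  let t : G → G := fun g => (QuotientGroup.mk g : G ⧸ H).out
  have ht : ∀ g, (t g)⁻¹ * g ∈ H := fun g => by
    rw [← QuotientGroup.eq]; simp [t]
  let h : G → H := fun g => ⟨(t g)⁻¹ * g, ht g⟩
  let PG : G → Finset G := fun g => (P (h g)).image (fun y : H => t g * (y : G))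
  have htt : ∀ g (y : H), t (t g * y) = t g := by
    intro g y
    have : (QuotientGroup.mk (t g * y) : G ⧸ H) = QuotientGroup.mk g := by
      rw [QuotientGroup.mk_mul_of_mem _ y.2]; simp [t]
    simp only [t] at this ⊢
    rw [this]
  have hh : ∀ g (y : H), h (t g * y) = y := by
    intro g y
    apply Subtype.ext
    simp [h, htt]
  refine polytiling_of_partition PG ((fun y : H => (y : G)) '' K) (hK.image _) n (t 1) F
    ?_ ?_ ?_ ?_ ?_
  · intro x
    exact Finset.mem_image.2 ⟨h x, (hP _).1, by simp [h]⟩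
  · intro x
    rw [Finset.card_image_of_injective, (hP _).2.1]
    intro a b hab
    simpa using hab
  · intro x y hy
    obtain ⟨z, hz, rfl⟩ := Finset.mem_image.1 hy
    simp only [PG]
    rw [htt, hh, (hP (h x)).2.2.1 z hz]
  · intro x y hy
    obtain ⟨z, hz, rfl⟩ := Finset.mem_image.1 hy
    refine ⟨_, (hP (h x)).2.2.2 z hz, ?_⟩
    simp [h, mul_assoc]
  · intro f hf
    have e1 : t (t 1) = t 1 := by simpa using htt 1 1
    have e2 : h (t 1) = 1 := by simpa using hh 1 1
    refine Finset.mem_image.2 ⟨⟨f, hEmem f hf⟩, ?_, by simp [e1]⟩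
    rw [e2]
    exact hEP (by simp [E, hf])

end Aux

/-- In a countable non-locally-finite group there are fair polytiles whose tiles have any
prescribed cardinality `n ≥ 1`; moreover any finite set `F` is contained in the first tile
of a fair polytile of any sufficiently large prescribed cardinality. -/
theorem fair_polytiles_of_all_sizes (G : Type*) [Group G] [Countable G]
    (hnlf : ¬ ∀ F : Finset G, ((Subgroup.closure (F : Set G) : Subgroup G) : Set G).Finite) :
    (∀ n : ℕ, 1 ≤ n → ∃ P : Polytiling G, P.Fair ∧ (P.T P.fst).card = n) ∧
    (∀ F : Finset G, ∃ N : ℕ, ∀ n : ℕ, N ≤ n →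
      ∃ P : Polytiling G, P.Fair ∧ (F : Set G) ⊆ ((P.T P.fst : Finset G) : Set G) ∧
        (P.T P.fst).card = n) := by
  classical
  constructor
  · intro n hn
    obtain ⟨P, h1, _, h3⟩ := main_aux hnlf ∅ n (by simpa using hn)
    exact ⟨P, h1, h3⟩
  · intro F
    exact ⟨(insert 1 F).card + F.card + 1, fun n hn => main_aux hnlf F n
      (le_trans (by have := Finset.card_insert_le (1 : G) F; convert (by omega : (insert 1 F).card ≤ (insert 1 F).card + F.card + 1)) hn)⟩
end
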